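/- Let f be a nonzero binary octavic over an algebraically closed field k with char k ∉ {2,3,5,7}. Then f has a root of multiplicity exactly four if and only if there exists r ∈ k, r ≠ 0, such that J_2(f) = 2r^2, J_3(f) = 2^2·3·r^3, J_4(f) = 2^6·r^4, J_5(f) = 2^6·r^5, J_6(f) = 2^9·r^6, J_7(f) = 2^9·r^7 and J_8(f) = 2^{11}·3^2·r^8. Moreover, if f(x,y) = x^4(a x^4 + b x^3 y + c x^2 y^2 + d x y^3 + e y^4), then these identities hold with r = e. -/

import Mathlib

noncomputable section

open MvPolynomial


variable {k : Type*} [Field k]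

/-- char k not in {2,3,5,7} -/
def CharOK (k : Type*) [Field k] : Prop :=
  ringChar k ≠ 2 ∧ ringChar k ≠ 3 ∧ ringChar k ≠ 5 ∧ ringChar k ≠ 7

/-- the r-th transvectant of binary forms f, g of degrees n and m -/
def transvectant (n m r : ℕ) (f g : MvPolynomial (Fin 2) k) : MvPolynomial (Fin 2) k :=
  C ((((m - r).factorial * (n - r).factorial : ℕ) : k) /
      ((n.factorial * m.factorial : ℕ) : k)) *
    ∑ j ∈ Finset.range (r + 1),
      C ((-1 : k) ^ j * (r.choose j : k)) *
        ((fun p => pderiv (0 : Fin 2) p)^[r - j] ((fun p => pderiv (1 : Fin 2) p)^[j] f)) *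
        ((fun p => pderiv (0 : Fin 2) p)^[j] ((fun p => pderiv (1 : Fin 2) p)^[r - j] g))

/-- the binary octavic with coefficient vector a -/
def octForm (a : Fin 9 → k) : MvPolynomial (Fin 2) k :=
  ∑ i : Fin 9, C (a i) * X 0 ^ (i : ℕ) * X 1 ^ (8 - (i : ℕ))

def covg (a : Fin 9 → k) := transvectant 8 8 4 (octForm a) (octForm a)
def covk (a : Fin 9 → k) := transvectant 8 8 6 (octForm a) (octForm a)
def covh (a : Fin 9 → k) := transvectant 4 4 2 (covk a) (covk a)
def covm (a : Fin 9 → k) := transvectant 8 4 4 (octForm a) (covk a)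
def covn (a : Fin 9 → k) := transvectant 8 4 4 (octForm a) (covh a)
def covp (a : Fin 9 → k) := transvectant 8 4 4 (covg a) (covk a)
def covq (a : Fin 9 → k) := transvectant 8 4 4 (covg a) (covh a)

def J2 (a : Fin 9 → k) : k :=
  (2 ^ 2 * 5 * 7 : k) * constantCoeff (transvectant 8 8 8 (octForm a) (octForm a))
def J3 (a : Fin 9 → k) : k :=
  ((2 ^ 4 * 5 ^ 2 * 7 ^ 3 : k) / 3) * constantCoeff (transvectant 8 8 8 (octForm a) (covg a))
def J4 (a : Fin 9 → k) : k :=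
  (2 ^ 9 * 3 * 7 ^ 4 : k) * constantCoeff (transvectant 4 4 4 (covk a) (covk a))
def J5 (a : Fin 9 → k) : k :=
  (2 ^ 9 * 5 * 7 ^ 5 : k) * constantCoeff (transvectant 4 4 4 (covm a) (covk a))
def J6 (a : Fin 9 → k) : k :=
  (2 ^ 14 * 3 ^ 2 * 7 ^ 6 : k) * constantCoeff (transvectant 4 4 4 (covk a) (covh a))
def J7 (a : Fin 9 → k) : k :=
  (2 ^ 14 * 3 * 5 * 7 ^ 7 : k) * constantCoeff (transvectant 4 4 4 (covm a) (covh a))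
def J8 (a : Fin 9 → k) : k :=
  (2 ^ 17 * 3 * 5 ^ 2 * 7 ^ 9 : k) * constantCoeff (transvectant 4 4 4 (covp a) (covh a))
def J9 (a : Fin 9 → k) : k :=
  (2 ^ 19 * 3 ^ 2 * 5 * 7 ^ 9 : k) * constantCoeff (transvectant 4 4 4 (covn a) (covh a))
def J10 (a : Fin 9 → k) : k :=
  (2 ^ 22 * 3 ^ 2 * 5 ^ 2 * 7 ^ 11 : k) * constantCoeff (transvectant 4 4 4 (covq a) (covh a))

def Jinv : ℕ → (Fin 9 → k) → k
  | 2 => J2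
  | 3 => J3
  | 4 => J4
  | 5 => J5
  | 6 => J6
  | 7 => J7
  | 8 => J8
  | 9 => J9
  | 10 => J10
  | _ => fun _ => 0

/-- action of a 2x2 matrix on binary forms by substitution (X,Y) ↦ (aX+bY, cX+dY) -/
def substForm (g : Matrix (Fin 2) (Fin 2) k) (p : MvPolynomial (Fin 2) k) :
    MvPolynomial (Fin 2) k :=
  aeval (fun i : Fin 2 => C (g i 0) * X 0 + C (g i 1) * X 1) p

/-- coefficients of the transformed octavic -/
def octAct (g : Matrix (Fin 2) (Fin 2) k) (a : Fin 9 → k) : Fin 9 → k := fun i =>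
  coeff (Finsupp.single (0 : Fin 2) (i : ℕ) + Finsupp.single (1 : Fin 2) (8 - (i : ℕ)))
    (substForm g (octForm a))

/-- `f` has a root of multiplicity exactly `r` at the projective point `(x0 : y0)`. -/
def HasRootOfMultExactly (f : MvPolynomial (Fin 2) k) (x0 y0 : k) (r : ℕ) : Prop :=
  ¬(x0 = 0 ∧ y0 = 0) ∧ (C y0 * X 0 - C x0 * X 1) ^ r ∣ f ∧
    ¬((C y0 * X 0 - C x0 * X 1) ^ (r + 1) ∣ f)

/-! Transvectants are `SL₂`-equivariant, so the `J_n` depend only on the `SL₂`-orbit of `f` and `κ`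
moves along with `f`. A root of multiplicity four can be moved to `x = 0`; then `f` is `x ^ 4` times
a quartic and the identities are a direct computation, with `r` the coefficient of `x ^ 4 * y ^ 4`.

Conversely, the identities for `J_4` and `J_6` give the invariants of degrees two and three of the
quartic `κ` the values which they take on `c * x ^ 2 * y ^ 2` for some `c ≠ 0`. Hence `κ` has a
double root, and some substitution of determinant one brings it to the shape
`b * x ^ 4 + c * x ^ 2 * y ^ 2`. With `κ` in this shape, the remaining identities, together with the
five equations which express `κ` through the coefficients of `f`, form a polynomial system with
`r ≠ 0`, and solving it shows that `f` is divisible by `x ^ 4` or by `y ^ 4` and that its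
coefficient of `x ^ 4 * y ^ 4` is `r`. -/

open Finset.HasAntidiagonal (antidiagonal mem_antidiagonal)
open scoped MatrixGroups

section Omega

variable {R : Type*} [CommRing R]

theorem pderiv_zero_pderiv_one (f : MvPolynomial (Fin 2) R) :
    pderiv 0 (pderiv 1 f) = pderiv 1 (pderiv 0 f) := by
  let D (i : Fin 2) : Derivation R (MvPolynomial (Fin 2) R) (MvPolynomial (Fin 2) R) := pderiv i
  have commutator_eq_zero : ⁅D 0, D 1⁆ = 0 :=
    derivation_ext fun i => by fin_cases i <;> simp [D, Derivation.commutator_apply, pderiv_X]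
  exact sub_eq_zero.1 (DFunLike.congr_fun commutator_eq_zero f)

/-- The `r`-th power of Cayley's Ω-process, i.e. the transvectant without its numerical factor.
The recursion applies one operator `∂₀ ⊗ ∂₁ - ∂₁ ⊗ ∂₀` at a time. -/
def cayleyOmega : ℕ → MvPolynomial (Fin 2) R → MvPolynomial (Fin 2) R → MvPolynomial (Fin 2) R
  | 0, f, g => f * g
  | r + 1, f, g =>
    cayleyOmega r (pderiv 0 f) (pderiv 1 g) - cayleyOmega r (pderiv 1 f) (pderiv 0 g)

theorem cayleyOmega_linearCombination_left (r : ℕ) (c d : R) (f f' g : MvPolynomial (Fin 2) R) :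
    cayleyOmega r (C c * f + C d * f') g = C c * cayleyOmega r f g + C d * cayleyOmega r f' g := by
  induction r generalizing f f' g with
  | zero => simp only [cayleyOmega]; ring
  | succ r ih => simp only [cayleyOmega, map_add, pderiv_C_mul, ih]; ring

theorem cayleyOmega_linearCombination_right (r : ℕ) (c d : R) (f g g' : MvPolynomial (Fin 2) R) :
    cayleyOmega r f (C c * g + C d * g') = C c * cayleyOmega r f g + C d * cayleyOmega r f g' := by
  induction r generalizing f g g' with
  | zero => simp only [cayleyOmega]; ring
  | succ r ih => simp only [cayleyOmega, map_add, pderiv_C_mul, ih]; ring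

theorem sum_antidiagonal_eq_cayleyOmega (r : ℕ) (f g : MvPolynomial (Fin 2) R) :
    ∑ ij ∈ antidiagonal r, (r.choose ij.1 : MvPolynomial (Fin 2) R) *
      ((-1) ^ ij.1 * ((pderiv 0)^[ij.2] ((pderiv 1)^[ij.1] f)) *
        ((pderiv 0)^[ij.1] ((pderiv 1)^[ij.2] g))) = cayleyOmega r f g := by
  have comm (n : ℕ) (p : MvPolynomial (Fin 2) R) :
      pderiv 0 ((pderiv 1)^[n] p) = (pderiv 1)^[n] (pderiv 0 p) :=
    (Function.Commute.iterate_right (f := pderiv 0) (g := pderiv 1) pderiv_zero_pderiv_one n) p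
  induction r generalizing f g with
  | zero => simp [cayleyOmega]
  | succ r ih =>
    rw [Finset.sum_antidiagonal_choose_succ_mul (fun i j => (-1) ^ i *
      ((pderiv 0)^[j] ((pderiv 1)^[i] f)) * ((pderiv 0)^[i] ((pderiv 1)^[j] g))), cayleyOmega,
      ← ih, ← ih, sub_eq_add_neg, ← Finset.sum_neg_distrib]
    refine congrArg₂ _ (Finset.sum_congr rfl fun ij _ => ?_) (Finset.sum_congr rfl fun ij hij => ?_)
    · rw [Function.iterate_succ_apply, Function.iterate_succ_apply, comm]
    · rw [← mem_antidiagonal.1 hij, Nat.choose_symm_add, Function.iterate_succ_apply,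
        Function.iterate_succ_apply, comm, pow_succ]
      ring

/-- The substitution `X i ↦ M i 0 * X 0 + M i 1 * X 1`; it is `substForm` as an algebra map. -/
def linearSubst (M : Matrix (Fin 2) (Fin 2) R) :
    MvPolynomial (Fin 2) R →ₐ[R] MvPolynomial (Fin 2) R :=
  aeval fun i => C (M i 0) * X 0 + C (M i 1) * X 1

theorem linearSubst_X (M : Matrix (Fin 2) (Fin 2) R) (i : Fin 2) :
    linearSubst M (X i) = C (M i 0) * X 0 + C (M i 1) * X 1 :=
  aeval_X _ i

theorem linearSubst_C (M : Matrix (Fin 2) (Fin 2) R) (c : R) : linearSubst M (C c) = C c :=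
  aeval_C _ c

theorem linearSubst_one : linearSubst (1 : Matrix (Fin 2) (Fin 2) R) = AlgHom.id R _ := by
  ext i
  fin_cases i <;> simp [linearSubst_X]

theorem linearSubst_linearSubst (M N : Matrix (Fin 2) (Fin 2) R) (f : MvPolynomial (Fin 2) R) :
    linearSubst M (linearSubst N f) = linearSubst (N * M) f := by
  suffices h : (linearSubst M).comp (linearSubst N) = linearSubst (N * M) from
    DFunLike.congr_fun h f
  ext1 i
  simp only [AlgHom.comp_apply, linearSubst_X, map_add, map_mul, linearSubst_C, Matrix.mul_apply,
    Fin.sum_univ_two]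
  ring

theorem linearSubst_isHomogeneous (M : Matrix (Fin 2) (Fin 2) R) {f : MvPolynomial (Fin 2) R}
    {n : ℕ} (hf : f.IsHomogeneous n) : (linearSubst M f).IsHomogeneous n := by
  rw [← one_mul n]
  exact hf.aeval _ fun i => (isHomogeneous_C_mul_X _ _).add (isHomogeneous_C_mul_X _ _)

theorem pderiv_linearSubst_X (M : Matrix (Fin 2) (Fin 2) R) (i j : Fin 2) :
    pderiv j (linearSubst M (X i)) = C (M i j) := by
  fin_cases j <;> simp [linearSubst_X, pderiv_X]

theorem pderiv_linearSubst (M : Matrix (Fin 2) (Fin 2) R) (j : Fin 2)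
    (f : MvPolynomial (Fin 2) R) :
    pderiv j (linearSubst M f) =
      linearSubst M (C (M 0 j) * pderiv 0 f + C (M 1 j) * pderiv 1 f) := by
  induction f using MvPolynomial.induction_on with
  | C a => simp
  | add f g hf hg => simp only [map_add, hf, hg, map_mul]; ring
  | mul_X f i hf =>
    have chain_rule_X : C (M i j) = linearSubst M (C (M 0 j)) * linearSubst M (pderiv 0 (X i)) +
        linearSubst M (C (M 1 j)) * linearSubst M (pderiv 1 (X i)) := by
      fin_cases i <;> simp [pderiv_X]
    simp only [map_mul, Derivation.leibniz, smul_eq_mul, hf, pderiv_linearSubst_X, map_add]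
    rw [chain_rule_X]
    ring

theorem cayleyOmega_linearSubst (M : Matrix (Fin 2) (Fin 2) R) (r : ℕ)
    (f g : MvPolynomial (Fin 2) R) :
    cayleyOmega r (linearSubst M f) (linearSubst M g) =
      C M.det ^ r * linearSubst M (cayleyOmega r f g) := by
  induction r generalizing f g with
  | zero => simp [cayleyOmega]
  | succ r ih =>
    simp only [cayleyOmega, pderiv_linearSubst, ih, cayleyOmega_linearCombination_left,
      cayleyOmega_linearCombination_right, map_add, map_sub, map_mul, linearSubst_C,
      Matrix.det_fin_two]
    ring

theorem constantCoeff_linearSubst (M : Matrix (Fin 2) (Fin 2) R) (f : MvPolynomial (Fin 2) R) :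
    constantCoeff (linearSubst M f) = constantCoeff f := by
  suffices h : (constantCoeff.comp (linearSubst M : _ →+* MvPolynomial (Fin 2) R)) = constantCoeff
    from DFunLike.congr_fun h f
  ext i
  · simp
  · simp [linearSubst_X]

theorem linearSubst_inv_linearSubst (M : SL(2, R)) (f : MvPolynomial (Fin 2) R) :
    linearSubst (M⁻¹ : SL(2, R)) (linearSubst (M : Matrix _ _ R) f) = f := by
  rw [linearSubst_linearSubst, ← Matrix.SpecialLinearGroup.coe_mul, mul_inv_cancel,
    Matrix.SpecialLinearGroup.coe_one, linearSubst_one, AlgHom.id_apply]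

theorem linearSubst_dvd_linearSubst_iff (M : SL(2, R)) {f g : MvPolynomial (Fin 2) R} :
    linearSubst (M : Matrix _ _ R) f ∣ linearSubst (M : Matrix _ _ R) g ↔ f ∣ g := by
  refine ⟨fun h => ?_, map_dvd _⟩
  simpa only [linearSubst_inv_linearSubst] using map_dvd (linearSubst (M⁻¹ : SL(2, R)).1) h

end Omega

theorem transvectant_eq_cayleyOmega (n m r : ℕ) (f g : MvPolynomial (Fin 2) k) :
    transvectant n m r f g = C ((((m - r).factorial * (n - r).factorial : ℕ) : k) /
      ((n.factorial * m.factorial : ℕ) : k)) * cayleyOmega r f g := by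
  rw [transvectant, ← sum_antidiagonal_eq_cayleyOmega,
    Finset.Nat.sum_antidiagonal_eq_sum_range_succ_mk]
  congr 1
  refine Finset.sum_congr rfl fun j _ => ?_
  simp only [map_mul, map_pow, map_neg, map_one, map_natCast]
  ring

theorem transvectant_linearSubst (M : SL(2, k)) (n m r : ℕ) (f g : MvPolynomial (Fin 2) k) :
    transvectant n m r (linearSubst M.1 f) (linearSubst M.1 g) =
      linearSubst M.1 (transvectant n m r f g) := by
  simp only [transvectant_eq_cayleyOmega, cayleyOmega_linearSubst, M.2, map_one, one_pow, one_mul,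
    map_mul, linearSubst_C]

section BinomForm

variable {R : Type*} [CommRing R]

/-- The binary form `∑ (n choose i) * A i * X 0 ^ i * X 1 ^ (n - i)`. With coefficients normalised
by binomials, differentiation only shifts the sequence `A`; the values `A i` with `n < i` do not
matter. -/
def binomForm (n : ℕ) (A : ℕ → R) : MvPolynomial (Fin 2) R :=
  ∑ ij ∈ antidiagonal n, C ((n.choose ij.1 : R) * A ij.1) * X 0 ^ ij.1 * X 1 ^ ij.2

theorem coeff_binomForm (n : ℕ) (A : ℕ → R) (s : Fin 2 →₀ ℕ) :
    coeff s (binomForm n A) = if s 0 + s 1 = n then (n.choose (s 0) : R) * A (s 0) else 0 := by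
  have term_eq_monomial (c : R) (i j : ℕ) : C c * X 0 ^ i * X 1 ^ j =
      monomial (Finsupp.single (0 : Fin 2) i + Finsupp.single 1 j) c := by
    rw [X_pow_eq_monomial, X_pow_eq_monomial, C_mul_monomial, monomial_mul, mul_one, mul_one]
  have exponent_eq_iff (ij : ℕ × ℕ) :
      Finsupp.single (0 : Fin 2) ij.1 + Finsupp.single 1 ij.2 = s ↔ ij = (s 0, s 1) := by
    simp [Finsupp.ext_iff, Fin.forall_fin_two, Prod.ext_iff]
  simp only [binomForm, coeff_sum, term_eq_monomial, coeff_monomial, exponent_eq_iff,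
    Finset.sum_ite_eq', mem_antidiagonal]

theorem binomForm_isHomogeneous (n : ℕ) (A : ℕ → R) : (binomForm n A).IsHomogeneous n := by
  intro s hs
  rw [coeff_binomForm] at hs
  simpa [Finsupp.weight_apply, Finsupp.sum_fintype] using (ite_ne_right_iff.1 hs).1

theorem sum_C_mul_binomForm {ι : Type*} (t : Finset ι) (n : ℕ) (c : ι → R) (A : ι → ℕ → R) :
    ∑ j ∈ t, C (c j) * binomForm n (A j) = binomForm n fun i => ∑ j ∈ t, c j * A j i := by
  ext s
  simp only [coeff_sum, coeff_C_mul, coeff_binomForm, mul_ite, mul_zero]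
  split_ifs
  · rw [Finset.mul_sum]
    exact Finset.sum_congr rfl fun j _ => by ring
  · exact Finset.sum_const_zero

theorem constantCoeff_binomForm_zero (A : ℕ → R) : constantCoeff (binomForm 0 A) = A 0 := by
  simp [constantCoeff_eq, coeff_binomForm]

theorem pderiv_zero_binomForm (n : ℕ) (A : ℕ → R) :
    pderiv 0 (binomForm (n + 1) A) = C (n + 1 : R) * binomForm n fun i => A (i + 1) := by
  rw [binomForm, binomForm, Finset.Nat.sum_antidiagonal_succ, map_add, map_sum, Finset.mul_sum]
  simp only [Derivation.leibniz, Derivation.leibniz_pow, pderiv_X_self, pderiv_C, smul_eq_mul,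
    pderiv_X_of_ne (show (1 : Fin 2) ≠ 0 by decide), mul_zero, smul_zero, add_zero, zero_add,
    pow_zero, mul_one, nsmul_eq_mul, Nat.add_sub_cancel]
  refine Finset.sum_congr rfl fun ij _ => ?_
  have h := congrArg (Nat.cast (R := MvPolynomial (Fin 2) R)) (Nat.add_one_mul_choose_eq n ij.1)
  push_cast at h
  simp only [map_mul, map_add, map_natCast, map_one, Nat.cast_add, Nat.cast_one]
  linear_combination -(C (A (ij.1 + 1)) * X 0 ^ ij.1 * X 1 ^ ij.2) * h

theorem pderiv_one_binomForm (n : ℕ) (A : ℕ → R) :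
    pderiv 1 (binomForm (n + 1) A) = C (n + 1 : R) * binomForm n A := by
  rw [binomForm, binomForm, Finset.Nat.sum_antidiagonal_succ', map_add, map_sum, Finset.mul_sum]
  simp only [Derivation.leibniz, Derivation.leibniz_pow, pderiv_X_self, pderiv_C, smul_eq_mul,
    pderiv_X_of_ne (show (0 : Fin 2) ≠ 1 by decide), mul_zero, smul_zero, add_zero, zero_add,
    pow_zero, mul_one, nsmul_eq_mul, Nat.add_sub_cancel]
  refine Finset.sum_congr rfl fun ij hij => ?_
  have h := congrArg (Nat.cast (R := MvPolynomial (Fin 2) R)) (Nat.choose_mul_succ_eq n ij.1)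
  rw [show n + 1 - ij.1 = ij.2 + 1 by rw [← mem_antidiagonal.1 hij]; omega] at h
  push_cast at h
  simp only [map_mul, map_add, map_natCast, map_one, Nat.cast_add, Nat.cast_one]
  linear_combination -(C (A ij.1) * X 0 ^ ij.1 * X 1 ^ ij.2) * h

theorem iterate_pderiv_binomForm (n p q : ℕ) (A : ℕ → R) :
    (pderiv 0)^[p] ((pderiv 1)^[q] (binomForm (n + q + p) A)) =
      C ((n + q + p).descFactorial (q + p) : R) * binomForm n fun i => A (i + p) := by
  have descFactorial_succ (n d : ℕ) :
      (((n + 1 + d).descFactorial (d + 1) : ℕ) : R) = (n + 1 + d).descFactorial d * (n + 1) := by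
    rw [Nat.descFactorial_succ, Nat.add_sub_cancel, mul_comm]
    push_cast
    rfl
  induction p generalizing n with
  | zero =>
    induction q generalizing n with
    | zero => simp
    | succ q ih =>
      simp only [Function.iterate_zero, id_eq, add_zero] at ih ⊢
      rw [Function.iterate_succ_apply', show n + (q + 1) = n + 1 + q by omega, ih,
        pderiv_C_mul, pderiv_one_binomForm, ← mul_assoc, ← map_mul, ← descFactorial_succ]
  | succ p ih =>
    rw [Function.iterate_succ_apply', show n + q + (p + 1) = n + 1 + q + p by omega, ih,
      pderiv_C_mul, pderiv_zero_binomForm, ← mul_assoc, ← map_mul, add_assoc (n + 1),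
      ← descFactorial_succ, ← add_assoc q]
    simp only [add_assoc, add_comm 1]

end BinomForm

theorem natCast_choose_ne_zero {n i : ℕ} (hn : (n.factorial : k) ≠ 0) (hi : i ≤ n) :
    (n.choose i : k) ≠ 0 := by
  rw [← Nat.choose_mul_factorial_mul_factorial hi] at hn
  push_cast at hn
  exact left_ne_zero_of_mul (left_ne_zero_of_mul hn)

theorem exists_eq_binomForm {n : ℕ} (hn : (n.factorial : k) ≠ 0) {f : MvPolynomial (Fin 2) k}
    (hf : f.IsHomogeneous n) : ∃ A : ℕ → k, f = binomForm n A := by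
  refine ⟨fun i => coeff (Finsupp.single 0 i + Finsupp.single 1 (n - i)) f / n.choose i, ?_⟩
  ext s
  rw [coeff_binomForm]
  split_ifs with hs
  · have exponent : Finsupp.single 0 (s 0) + Finsupp.single 1 (n - s 0) = s := by
      ext i
      fin_cases i
      · simp
      · simp [← hs]
    rw [exponent, mul_div_cancel₀ _ (natCast_choose_ne_zero hn (hs ▸ Nat.le_add_right _ _))]
  · refine hf.coeff_eq_zero fun hdeg => hs ?_
    simpa [Finsupp.degree_eq_sum] using hdeg

theorem binomForm_eq_iff {n : ℕ} (hn : (n.factorial : k) ≠ 0) {A B : ℕ → k} :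
    binomForm n A = binomForm n B ↔ ∀ i ≤ n, A i = B i := by
  constructor
  · intro h i hi
    have hcoeff := congrArg (coeff (Finsupp.single 0 i + Finsupp.single 1 (n - i))) h
    simpa [coeff_binomForm, hi, natCast_choose_ne_zero hn hi] using hcoeff
  · intro h
    ext s
    simp only [coeff_binomForm]
    split_ifs with hs
    · rw [h _ (hs ▸ Nat.le_add_right _ _)]
    · rfl

theorem X_zero_pow_dvd_binomForm_iff {n : ℕ} (hn : (n.factorial : k) ≠ 0) (m : ℕ) (A : ℕ → k) :
    X 0 ^ m ∣ binomForm n A ↔ ∀ i < m, i ≤ n → A i = 0 := by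
  constructor
  · rintro ⟨q, hq⟩ i him hin
    have h := coeff_binomForm n A (Finsupp.single 0 i + Finsupp.single 1 (n - i))
    rw [hq, X_pow_eq_monomial, coeff_monomial_mul', if_neg fun hle => ?_] at h
    · simpa [hin, natCast_choose_ne_zero hn hin] using h.symm
    · simpa [him.not_ge] using hle 0
  · intro hA
    refine Finset.dvd_sum fun ij hij => dvd_mul_of_dvd_left ?_ _
    obtain him | him := lt_or_ge ij.1 m
    · rw [hA ij.1 him (mem_antidiagonal.1 hij ▸ Nat.le_add_right _ _), mul_zero, map_zero, zero_mul]
      exact dvd_zero _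
    · exact dvd_mul_of_dvd_right (pow_dvd_pow _ him) _

/-- The normalised coefficients of the product of `binomForm n A` and `binomForm m B`. -/
def mulCoeff (n m : ℕ) (A B : ℕ → k) (i : ℕ) : k :=
  (∑ ab ∈ antidiagonal i, (n.choose ab.1 * A ab.1) * (m.choose ab.2 * B ab.2)) /
    (n + m).choose i

/-- The normalised coefficients of the `r`-th transvectant of `binomForm (n + r) A` and
`binomForm (m + r) B`, which is a form of degree `n + m`. -/
def transvectantCoeff (n m r : ℕ) (A B : ℕ → k) (i : ℕ) : k :=
  ∑ j ∈ Finset.range (r + 1),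
    (-1) ^ j * r.choose j * mulCoeff n m (fun a => A (a + (r - j))) (fun b => B (b + j)) i

theorem binomForm_mul {n m : ℕ} (hnm : ((n + m).factorial : k) ≠ 0) (A B : ℕ → k) :
    binomForm n A * binomForm m B = binomForm (n + m) (mulCoeff n m A B) := by
  have expand_mulCoeff : binomForm (n + m) (mulCoeff n m A B) =
      ∑ ij ∈ antidiagonal (n + m), ∑ ab ∈ antidiagonal ij.1,
        C ((n.choose ab.1 * A ab.1) * (m.choose ab.2 * B ab.2)) * X 0 ^ ij.1 * X 1 ^ ij.2 := by
    refine Finset.sum_congr rfl fun ij hij => ?_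
    have hle : ij.1 ≤ n + m := mem_antidiagonal.1 hij ▸ Nat.le_add_right _ _
    rw [mulCoeff, mul_div_cancel₀ _ (natCast_choose_ne_zero hnm hle), map_sum, Finset.sum_mul,
      Finset.sum_mul]
  rw [expand_mulCoeff, Finset.sum_sigma', binomForm, binomForm, Finset.sum_mul_sum,
    ← Finset.sum_product']
  refine Finset.sum_of_injOn (fun pq => ⟨(pq.1.1 + pq.2.1, pq.1.2 + pq.2.2), (pq.1.1, pq.2.1)⟩)
    ?_ ?_ ?_ ?_
  · rintro ⟨⟨p, p'⟩, q, q'⟩ hpq ⟨⟨s, s'⟩, t, t'⟩ hst h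
    simp only [Finset.coe_product, Set.mem_prod, Finset.mem_coe, mem_antidiagonal, Sigma.mk.injEq,
      Prod.mk.injEq, heq_eq_eq] at hpq hst h ⊢
    omega
  · rintro ⟨⟨p, p'⟩, q, q'⟩ hpq
    simp only [Finset.mem_coe, Finset.mem_product, Finset.mem_sigma, mem_antidiagonal,
      and_true] at hpq ⊢
    omega
  · rintro ⟨⟨i, i'⟩, a, b⟩ hmem hnot
    simp only [Finset.mem_sigma, mem_antidiagonal] at hmem
    obtain ha | ha := lt_or_ge n a
    · simp [Nat.choose_eq_zero_of_lt ha]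
    obtain hb | hb := lt_or_ge m b
    · simp [Nat.choose_eq_zero_of_lt hb]
    refine absurd ⟨((a, n - a), (b, m - b)), ?_, ?_⟩ hnot
    · simp [ha, hb]
    · simp only [Sigma.mk.injEq, Prod.mk.injEq, heq_eq_eq, and_true]
      omega
  · rintro ⟨⟨p, p'⟩, q, q'⟩ -
    simp only [map_mul, pow_add]
    ring

theorem transvectant_binomForm {n m r : ℕ} (hn : ((n + r).factorial : k) ≠ 0)
    (hm : ((m + r).factorial : k) ≠ 0) (hnm : ((n + m).factorial : k) ≠ 0) (A B : ℕ → k) :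
    transvectant (n + r) (m + r) r (binomForm (n + r) A) (binomForm (m + r) B) =
      binomForm (n + m) (transvectantCoeff n m r A B) := by
  have iterate_pderiv (n p q : ℕ) (hpq : q + p = r) (A : ℕ → k) :
      (fun f => pderiv 0 f)^[p] ((fun f => pderiv 1 f)^[q] (binomForm (n + r) A)) =
        C ((n + r).descFactorial r : k) * binomForm n fun i => A (i + p) := by
    subst hpq
    rw [← add_assoc]
    exact iterate_pderiv_binomForm n p q A
  have normalisation : ((m.factorial * n.factorial : ℕ) : k) /
      (((n + r).factorial * (m + r).factorial : ℕ) : k) *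
        (((n + r).descFactorial r : k) * ((m + r).descFactorial r : k)) = 1 := by
    have hn' := Nat.factorial_mul_descFactorial (Nat.le_add_left r n)
    have hm' := Nat.factorial_mul_descFactorial (Nat.le_add_left r m)
    rw [Nat.add_sub_cancel] at hn' hm'
    rw [div_mul_eq_mul_div, div_eq_one_iff_eq (by push_cast; exact mul_ne_zero hn hm), ← hn',
      ← hm']
    push_cast
    ring
  rw [transvectant, Nat.add_sub_cancel, Nat.add_sub_cancel, Finset.mul_sum]
  unfold transvectantCoeff
  rw [← sum_C_mul_binomForm]
  refine Finset.sum_congr rfl fun j hj => ?_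
  have hjr : j ≤ r := Finset.mem_range_succ_iff.1 hj
  rw [iterate_pderiv n (r - j) j (by omega), iterate_pderiv m j (r - j) (by omega),
    ← binomForm_mul hnm]
  have h := congrArg (C : k → MvPolynomial (Fin 2) k) normalisation
  simp only [map_mul, map_one] at h ⊢
  linear_combination (C ((-1) ^ j) * C (r.choose j : k) * binomForm n (fun i => A (i + (r - j))) *
    binomForm m fun i => B (i + j)) * h

theorem CharOK.natCast_ne_zero (hk : CharOK k) {n e : ℕ} (hn : n ∣ 210 ^ e) : (n : k) ≠ 0 := by
  intro h
  have hdvd : ringChar k ∣ 210 ^ e := ((ringChar.spec k n).1 h).trans hn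
  have hprime : (ringChar k).Prime := (CharP.char_is_prime_or_zero k (ringChar k)).resolve_right
    fun h0 => pow_ne_zero e (by norm_num) (zero_dvd_iff.1 (h0 ▸ hdvd))
  have hdvd' : ringChar k ∣ 2 * 3 * 5 * 7 := hprime.dvd_of_dvd_pow hdvd
  have eq_of_dvd {p : ℕ} (hp : p.Prime) (h : ringChar k ∣ p) : ringChar k = p :=
    (Nat.prime_dvd_prime_iff_eq hprime hp).1 h
  obtain ⟨h2, h3, h5, h7⟩ := hk
  obtain ((h | h) | h) | h := by simpa only [hprime.dvd_mul] using hdvd'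
  exacts [h2 (eq_of_dvd Nat.prime_two h), h3 (eq_of_dvd Nat.prime_three h),
    h5 (eq_of_dvd Nat.prime_five h), h7 (eq_of_dvd Nat.prime_seven h)]

theorem CharOK.ofNat_ne_zero (hk : CharOK k) (n : ℕ) [n.AtLeastTwo] {e : ℕ} (hn : n ∣ 210 ^ e) :
    (OfNat.ofNat n : k) ≠ 0 := by
  exact_mod_cast hk.natCast_ne_zero hn

theorem CharOK.factorial_ne_zero (hk : CharOK k) {n : ℕ} (hn : n ≤ 8) : (n.factorial : k) ≠ 0 :=
  hk.natCast_ne_zero (e := 7) ((Nat.factorial_dvd_factorial hn).trans (by decide))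

/-- The octavic coefficient vector of `binomForm 8 A`. -/
def octCoeff (A : ℕ → k) (i : Fin 9) : k :=
  Nat.choose 8 i * A i

/-- The coefficients of `g = (f, f)^4` for `f = binomForm 8 A`. -/
def gCoeff (A : ℕ → k) : ℕ → k :=
  transvectantCoeff 4 4 4 A A

/-- The coefficients of `κ = (f, f)^6` for `f = binomForm 8 A`. -/
def kappaCoeff (A : ℕ → k) : ℕ → k :=
  transvectantCoeff 2 2 6 A A

/-- The coefficients of the Hessian `(q, q)^2` of the quartic `q = binomForm 4 K`. -/
def hessianCoeff (K : ℕ → k) : ℕ → k :=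
  transvectantCoeff 2 2 2 K K

/-- The coefficients of the quartic `(f, q)^4` for `f = binomForm 8 A` and `q = binomForm 4 K`. -/
def contractCoeff (A K : ℕ → k) : ℕ → k :=
  transvectantCoeff 4 0 4 A K

/-- The invariant bilinear form `(p, q)^4` of the quartics `binomForm 4 K` and `binomForm 4 L`. -/
def quarticPairing (K L : ℕ → k) : k :=
  transvectantCoeff 0 0 4 K L 0

/-- The invariant bilinear form `(f, g)^8` of the octavics `binomForm 8 A` and `binomForm 8 B`. -/
def octavicPairing (A B : ℕ → k) : k :=
  transvectantCoeff 0 0 8 A B 0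

/-- The seven identities satisfied by the invariants of an octavic `x ^ 4 * q` with `r` the
coefficient of `x ^ 4 * y ^ 4`. -/
def HasQuadrupleRootInvariants (a : Fin 9 → k) (r : k) : Prop :=
  J2 a = 2 * r ^ 2 ∧
  J3 a = 2 ^ 2 * 3 * r ^ 3 ∧
  J4 a = 2 ^ 6 * r ^ 4 ∧
  J5 a = 2 ^ 6 * r ^ 5 ∧
  J6 a = 2 ^ 9 * r ^ 6 ∧
  J7 a = 2 ^ 9 * r ^ 7 ∧
  J8 a = 2 ^ 11 * 3 ^ 2 * r ^ 8

theorem hasQuadrupleRootInvariants_iff_of_linearSubst (M : SL(2, k)) {a b : Fin 9 → k}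
    (h : octForm b = linearSubst M.1 (octForm a)) (r : k) :
    HasQuadrupleRootInvariants b r ↔ HasQuadrupleRootInvariants a r := by
  simp only [HasQuadrupleRootInvariants, J2, J3, J4, J5, J6, J7, J8, covg, covk, covh, covm, covp,
    h, transvectant_linearSubst, constantCoeff_linearSubst]

theorem octForm_octCoeff (A : ℕ → k) : octForm (octCoeff A) = binomForm 8 A := by
  rw [octForm, binomForm, Finset.Nat.sum_antidiagonal_eq_sum_range_succ_mk,
    ← Fin.sum_univ_eq_sum_range
      (fun i => (C ((Nat.choose 8 i : k) * A i) * X 0 ^ i * X 1 ^ (8 - i) : MvPolynomial _ k))]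
  rfl

theorem exists_eq_octCoeff (hk : CharOK k) (a : Fin 9 → k) : ∃ A : ℕ → k, a = octCoeff A := by
  refine ⟨fun i => if h : i < 9 then a ⟨i, h⟩ / Nat.choose 8 i else 0, funext fun i => ?_⟩
  have hi := natCast_choose_ne_zero (hk.factorial_ne_zero le_rfl) (Nat.lt_succ_iff.1 i.2)
  simp only [octCoeff, i.2, dif_pos, Fin.eta, mul_div_cancel₀ _ hi]

theorem covg_octCoeff (hk : CharOK k) (A : ℕ → k) :
    covg (octCoeff A) = binomForm 8 (gCoeff A) := by
  have h8 := hk.factorial_ne_zero (n := 4 + 4) le_rfl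
  rw [covg, octForm_octCoeff]
  exact transvectant_binomForm (n := 4) (m := 4) (r := 4) h8 h8 h8 A A

theorem covk_octCoeff (hk : CharOK k) (A : ℕ → k) :
    covk (octCoeff A) = binomForm 4 (kappaCoeff A) := by
  have h8 := hk.factorial_ne_zero (n := 2 + 6) le_rfl
  have h4 := hk.factorial_ne_zero (n := 2 + 2) (by norm_num)
  rw [covk, octForm_octCoeff]
  exact transvectant_binomForm (n := 2) (m := 2) (r := 6) h8 h8 h4 A A

theorem transvectant_binomForm_four_four_two (hk : CharOK k) (K L : ℕ → k) :
    transvectant 4 4 2 (binomForm 4 K) (binomForm 4 L) =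
      binomForm 4 (transvectantCoeff 2 2 2 K L) := by
  have h4 := hk.factorial_ne_zero (n := 2 + 2) (by norm_num)
  exact transvectant_binomForm (n := 2) (m := 2) (r := 2) h4 h4 h4 K L

theorem transvectant_binomForm_eight_four_four (hk : CharOK k) (A K : ℕ → k) :
    transvectant 8 4 4 (binomForm 8 A) (binomForm 4 K) = binomForm 4 (contractCoeff A K) := by
  have h8 := hk.factorial_ne_zero (n := 4 + 4) le_rfl
  have h4 := hk.factorial_ne_zero (n := 0 + 4) (by norm_num)
  exact transvectant_binomForm (n := 4) (m := 0) (r := 4) h8 h4 h4 A K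

theorem constantCoeff_transvectant_binomForm {n : ℕ} (hn : (n.factorial : k) ≠ 0)
    (A B : ℕ → k) :
    constantCoeff (transvectant n n n (binomForm n A) (binomForm n B)) =
      transvectantCoeff 0 0 n A B 0 := by
  have h := transvectant_binomForm (n := 0) (m := 0) (r := n) (by rwa [zero_add])
    (by rwa [zero_add]) (by simp) A B
  rw [zero_add] at h
  rw [h, constantCoeff_binomForm_zero]

theorem hasQuadrupleRootInvariants_octCoeff_iff (hk : CharOK k) (A : ℕ → k) (r : k) :
    HasQuadrupleRootInvariants (octCoeff A) r ↔
      2 ^ 2 * 5 * 7 * octavicPairing A A = 2 * r ^ 2 ∧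
      2 ^ 4 * 5 ^ 2 * 7 ^ 3 / 3 * octavicPairing A (gCoeff A) = 2 ^ 2 * 3 * r ^ 3 ∧
      2 ^ 9 * 3 * 7 ^ 4 * quarticPairing (kappaCoeff A) (kappaCoeff A) = 2 ^ 6 * r ^ 4 ∧
      2 ^ 9 * 5 * 7 ^ 5 * quarticPairing (contractCoeff A (kappaCoeff A)) (kappaCoeff A) =
        2 ^ 6 * r ^ 5 ∧
      2 ^ 14 * 3 ^ 2 * 7 ^ 6 * quarticPairing (kappaCoeff A) (hessianCoeff (kappaCoeff A)) =
        2 ^ 9 * r ^ 6 ∧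
      2 ^ 14 * 3 * 5 * 7 ^ 7 * quarticPairing (contractCoeff A (kappaCoeff A))
        (hessianCoeff (kappaCoeff A)) = 2 ^ 9 * r ^ 7 ∧
      2 ^ 17 * 3 * 5 ^ 2 * 7 ^ 9 * quarticPairing (contractCoeff (gCoeff A) (kappaCoeff A))
        (hessianCoeff (kappaCoeff A)) = 2 ^ 11 * 3 ^ 2 * r ^ 8 := by
  simp only [HasQuadrupleRootInvariants, J2, J3, J4, J5, J6, J7, J8, covh, covm, covp,
    octForm_octCoeff, covg_octCoeff hk, covk_octCoeff hk, hessianCoeff,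
    quarticPairing, octavicPairing, transvectant_binomForm_four_four_two hk,
    transvectant_binomForm_eight_four_four hk,
    constantCoeff_transvectant_binomForm (hk.factorial_ne_zero (le_refl 8)),
    constantCoeff_transvectant_binomForm (hk.factorial_ne_zero (show 4 ≤ 8 by norm_num))]

theorem mulCoeff_zero_right {n i : ℕ} (h : (n.choose i : k) ≠ 0) (A B : ℕ → k) :
    mulCoeff n 0 A B i = A i * B 0 := by
  rw [mulCoeff, Finset.sum_eq_single (i, 0)]
  · simp only [Nat.choose_self, Nat.cast_one, add_zero]
    field_simp
  · rintro ⟨a, b⟩ hab hne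
    obtain rfl | hb := Nat.eq_zero_or_pos b
    · exact absurd (by simpa using hab) hne
    · simp [Nat.choose_eq_zero_of_lt hb]
  · simp

theorem transvectantCoeff_eq_sum_range (n m r : ℕ) (A B : ℕ → k) (i : ℕ) :
    transvectantCoeff n m r A B i = ∑ j ∈ Finset.range (r + 1), (-1) ^ j * r.choose j *
      ((∑ a ∈ Finset.range (i + 1), (n.choose a * A (a + (r - j))) *
        (m.choose (i - a) * B (i - a + j))) / (n + m).choose i) := by
  simp only [transvectantCoeff, mulCoeff, Finset.Nat.sum_antidiagonal_eq_sum_range_succ_mk]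

theorem quarticPairing_eq (K L : ℕ → k) : quarticPairing K L =
    K 4 * L 0 - 4 * K 3 * L 1 + 6 * K 2 * L 2 - 4 * K 1 * L 3 + K 0 * L 4 := by
  simp only [quarticPairing, transvectantCoeff_eq_sum_range, Finset.sum_range_succ,
    Finset.sum_range_zero, Nat.choose, Nat.reduceAdd, Nat.reduceSub]
  push_cast
  ring

theorem octavicPairing_eq (A B : ℕ → k) : octavicPairing A B =
    A 8 * B 0 - 8 * A 7 * B 1 + 28 * A 6 * B 2 - 56 * A 5 * B 3 + 70 * A 4 * B 4 -
      56 * A 3 * B 5 + 28 * A 2 * B 6 - 8 * A 1 * B 7 + A 0 * B 8 := by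
  simp only [octavicPairing, transvectantCoeff_eq_sum_range, Finset.sum_range_succ,
    Finset.sum_range_zero, Nat.choose, Nat.reduceAdd, Nat.reduceSub]
  push_cast
  ring

theorem contractCoeff_apply (hk : CharOK k) (A K : ℕ → k) {i : ℕ} (hi : i ≤ 4) :
    contractCoeff A K i = A (i + 4) * K 0 - 4 * A (i + 3) * K 1 + 6 * A (i + 2) * K 2 -
      4 * A (i + 1) * K 3 + A i * K 4 := by
  have h := natCast_choose_ne_zero (hk.factorial_ne_zero (n := 4) (by norm_num)) hi
  simp only [contractCoeff, transvectantCoeff, mulCoeff_zero_right h, Finset.sum_range_succ,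
    Finset.sum_range_zero, Nat.choose, Nat.reduceAdd, Nat.reduceSub, add_zero]
  push_cast
  ring

theorem kappaCoeff_zero (A : ℕ → k) :
    kappaCoeff A 0 = 2 * A 0 * A 6 - 12 * A 1 * A 5 + 30 * A 2 * A 4 - 20 * A 3 ^ 2 := by
  simp only [kappaCoeff, transvectantCoeff_eq_sum_range, Finset.sum_range_succ,
    Finset.sum_range_zero, Nat.choose, Nat.reduceAdd, Nat.reduceSub]
  push_cast
  ring

theorem kappaCoeff_one (hk : CharOK k) (A : ℕ → k) :
    kappaCoeff A 1 = A 0 * A 7 - 5 * A 1 * A 6 + 9 * A 2 * A 5 - 5 * A 3 * A 4 := by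
  have h4 := hk.ofNat_ne_zero 4 (e := 2) (by norm_num)
  simp only [kappaCoeff, transvectantCoeff_eq_sum_range, Finset.sum_range_succ,
    Finset.sum_range_zero, Nat.choose, Nat.reduceAdd, Nat.reduceSub]
  push_cast
  field_simp
  ring

theorem kappaCoeff_two (hk : CharOK k) (A : ℕ → k) :
    kappaCoeff A 2 =
      (A 0 * A 8 - 2 * A 1 * A 7 - 8 * A 2 * A 6 + 34 * A 3 * A 5 - 25 * A 4 ^ 2) / 3 := by
  have h6 := hk.ofNat_ne_zero 6 (e := 1) (by norm_num)
  have h3 := hk.ofNat_ne_zero 3 (e := 1) (by norm_num)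
  simp only [kappaCoeff, transvectantCoeff_eq_sum_range, Finset.sum_range_succ,
    Finset.sum_range_zero, Nat.choose, Nat.reduceAdd, Nat.reduceSub]
  push_cast
  field_simp
  ring

theorem kappaCoeff_three (hk : CharOK k) (A : ℕ → k) :
    kappaCoeff A 3 = A 1 * A 8 - 5 * A 2 * A 7 + 9 * A 3 * A 6 - 5 * A 4 * A 5 := by
  have h4 := hk.ofNat_ne_zero 4 (e := 2) (by norm_num)
  simp only [kappaCoeff, transvectantCoeff_eq_sum_range, Finset.sum_range_succ,
    Finset.sum_range_zero, Nat.choose, Nat.reduceAdd, Nat.reduceSub]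
  push_cast
  field_simp
  ring

theorem kappaCoeff_four (A : ℕ → k) :
    kappaCoeff A 4 = 2 * A 2 * A 8 - 12 * A 3 * A 7 + 30 * A 4 * A 6 - 20 * A 5 ^ 2 := by
  simp only [kappaCoeff, transvectantCoeff_eq_sum_range, Finset.sum_range_succ,
    Finset.sum_range_zero, Nat.choose, Nat.reduceAdd, Nat.reduceSub]
  push_cast
  ring

theorem hessianCoeff_zero (K : ℕ → k) :
    hessianCoeff K 0 = 2 * K 0 * K 2 - 2 * K 1 ^ 2 := by
  simp only [hessianCoeff, transvectantCoeff_eq_sum_range, Finset.sum_range_succ,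
    Finset.sum_range_zero, Nat.choose, Nat.reduceAdd, Nat.reduceSub]
  push_cast
  ring

theorem hessianCoeff_one (hk : CharOK k) (K : ℕ → k) :
    hessianCoeff K 1 = K 0 * K 3 - K 1 * K 2 := by
  have h4 := hk.ofNat_ne_zero 4 (e := 2) (by norm_num)
  simp only [hessianCoeff, transvectantCoeff_eq_sum_range, Finset.sum_range_succ,
    Finset.sum_range_zero, Nat.choose, Nat.reduceAdd, Nat.reduceSub]
  push_cast
  field_simp
  ring

theorem hessianCoeff_two (hk : CharOK k) (K : ℕ → k) :
    hessianCoeff K 2 = (K 0 * K 4 + 2 * K 1 * K 3 - 3 * K 2 ^ 2) / 3 := by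
  have h6 := hk.ofNat_ne_zero 6 (e := 1) (by norm_num)
  have h3 := hk.ofNat_ne_zero 3 (e := 1) (by norm_num)
  simp only [hessianCoeff, transvectantCoeff_eq_sum_range, Finset.sum_range_succ,
    Finset.sum_range_zero, Nat.choose, Nat.reduceAdd, Nat.reduceSub]
  push_cast
  field_simp
  ring

theorem hessianCoeff_three (hk : CharOK k) (K : ℕ → k) :
    hessianCoeff K 3 = K 1 * K 4 - K 2 * K 3 := by
  have h4 := hk.ofNat_ne_zero 4 (e := 2) (by norm_num)
  simp only [hessianCoeff, transvectantCoeff_eq_sum_range, Finset.sum_range_succ,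
    Finset.sum_range_zero, Nat.choose, Nat.reduceAdd, Nat.reduceSub]
  push_cast
  field_simp
  ring

theorem hessianCoeff_four (K : ℕ → k) :
    hessianCoeff K 4 = 2 * K 2 * K 4 - 2 * K 3 ^ 2 := by
  simp only [hessianCoeff, transvectantCoeff_eq_sum_range, Finset.sum_range_succ,
    Finset.sum_range_zero, Nat.choose, Nat.reduceAdd, Nat.reduceSub]
  push_cast
  ring

theorem gCoeff_zero (A : ℕ → k) :
    gCoeff A 0 = 2 * A 0 * A 4 - 8 * A 1 * A 3 + 6 * A 2 ^ 2 := by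
  simp only [gCoeff, transvectantCoeff_eq_sum_range, Finset.sum_range_succ,
    Finset.sum_range_zero, Nat.choose, Nat.reduceAdd, Nat.reduceSub]
  push_cast
  ring

theorem gCoeff_one (hk : CharOK k) (A : ℕ → k) :
    gCoeff A 1 = A 0 * A 5 - 3 * A 1 * A 4 + 2 * A 2 * A 3 := by
  have h8 := hk.ofNat_ne_zero 8 (e := 3) (by norm_num)
  simp only [gCoeff, transvectantCoeff_eq_sum_range, Finset.sum_range_succ,
    Finset.sum_range_zero, Nat.choose, Nat.reduceAdd, Nat.reduceSub]
  push_cast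
  field_simp
  ring

theorem gCoeff_two (hk : CharOK k) (A : ℕ → k) :
    gCoeff A 2 = (3 * A 0 * A 6 - 4 * A 1 * A 5 - 11 * A 2 * A 4 + 12 * A 3 ^ 2) / 7 := by
  have h28 := hk.ofNat_ne_zero 28 (e := 2) (by norm_num)
  have h7 := hk.ofNat_ne_zero 7 (e := 1) (by norm_num)
  simp only [gCoeff, transvectantCoeff_eq_sum_range, Finset.sum_range_succ,
    Finset.sum_range_zero, Nat.choose, Nat.reduceAdd, Nat.reduceSub]
  push_cast
  field_simp
  ring

theorem gCoeff_three (hk : CharOK k) (A : ℕ → k) :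
    gCoeff A 3 = (A 0 * A 7 + 2 * A 1 * A 6 - 12 * A 2 * A 5 + 9 * A 3 * A 4) / 7 := by
  have h56 := hk.ofNat_ne_zero 56 (e := 3) (by norm_num)
  have h7 := hk.ofNat_ne_zero 7 (e := 1) (by norm_num)
  simp only [gCoeff, transvectantCoeff_eq_sum_range, Finset.sum_range_succ,
    Finset.sum_range_zero, Nat.choose, Nat.reduceAdd, Nat.reduceSub]
  push_cast
  field_simp
  ring

theorem gCoeff_four (hk : CharOK k) (A : ℕ → k) :
    gCoeff A 4 =
      (A 0 * A 8 + 12 * A 1 * A 7 - 22 * A 2 * A 6 - 36 * A 3 * A 5 + 45 * A 4 ^ 2) / 35 := by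
  have h70 := hk.ofNat_ne_zero 70 (e := 1) (by norm_num)
  have h35 := hk.ofNat_ne_zero 35 (e := 1) (by norm_num)
  simp only [gCoeff, transvectantCoeff_eq_sum_range, Finset.sum_range_succ,
    Finset.sum_range_zero, Nat.choose, Nat.reduceAdd, Nat.reduceSub]
  push_cast
  field_simp
  ring

theorem octavicPairing_gCoeff (hk : CharOK k) (A : ℕ → k) :
    octavicPairing A (gCoeff A) = 6 * (A 0 * A 4 * A 8 - 4 * A 1 * A 3 * A 8 + 3 * A 2 ^ 2 * A 8 +
      12 * A 1 * A 4 * A 7 - 4 * A 0 * A 5 * A 7 - 8 * A 2 * A 3 * A 7 - 22 * A 2 * A 4 * A 6 -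
      8 * A 1 * A 5 * A 6 + 3 * A 0 * A 6 ^ 2 + 24 * A 3 ^ 2 * A 6 - 36 * A 3 * A 4 * A 5 +
      24 * A 2 * A 5 ^ 2 + 15 * A 4 ^ 3) := by
  have h8 := hk.ofNat_ne_zero 8 (e := 3) (by norm_num)
  have h28 := hk.ofNat_ne_zero 28 (e := 2) (by norm_num)
  have h56 := hk.ofNat_ne_zero 56 (e := 3) (by norm_num)
  have h70 := hk.ofNat_ne_zero 70 (e := 1) (by norm_num)
  simp only [octavicPairing_eq, gCoeff, transvectantCoeff_eq_sum_range, Finset.sum_range_succ,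
    Finset.sum_range_zero, Nat.choose, Nat.reduceAdd, Nat.reduceSub]
  push_cast
  field_simp
  ring

theorem hasQuadrupleRootInvariants_of_vanishing (hk : CharOK k) {A : ℕ → k}
    (h : ∀ i < 4, A i = 0) : HasQuadrupleRootInvariants (octCoeff A) (70 * A 4) := by
  have h3 := hk.ofNat_ne_zero 3 (e := 1) (by norm_num)
  have h7 := hk.ofNat_ne_zero 7 (e := 1) (by norm_num)
  have h35 := hk.ofNat_ne_zero 35 (e := 1) (by norm_num)
  obtain ⟨A0, A1, A2, A3⟩ : A 0 = 0 ∧ A 1 = 0 ∧ A 2 = 0 ∧ A 3 = 0 := by simp [h]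
  rw [hasQuadrupleRootInvariants_octCoeff_iff hk, octavicPairing_gCoeff hk, octavicPairing_eq]
  simp only [quarticPairing_eq, contractCoeff_apply hk _ _ (show 0 ≤ 4 by norm_num),
    contractCoeff_apply hk _ _ (show 1 ≤ 4 by norm_num),
    contractCoeff_apply hk _ _ (show 2 ≤ 4 by norm_num), hessianCoeff_zero, hessianCoeff_one hk,
    hessianCoeff_two hk, hessianCoeff_three hk, kappaCoeff_zero, kappaCoeff_one hk,
    kappaCoeff_two hk, gCoeff_zero, gCoeff_one hk, gCoeff_two hk, gCoeff_three hk, gCoeff_four hk,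
    A0, A1, A2, A3]
  refine ⟨?_, ?_, ?_, ?_, ?_, ?_, ?_⟩
  all_goals
    field_simp
    ring

theorem linearSubst_linearForm {R : Type*} [CommRing R] (M : SL(2, R)) :
    linearSubst M.1 (C (M.1 1 1) * X 0 - C (M.1 0 1) * X 1) = X 0 := by
  have hdet := congrArg (C : R → MvPolynomial (Fin 2) R)
    ((Matrix.det_fin_two M.1).symm.trans M.2)
  simp only [map_sub, map_mul, map_one] at hdet
  simp only [map_sub, map_mul, linearSubst_X, linearSubst_C]
  linear_combination X 0 * hdet

theorem exists_specialLinearGroup_snd_col {x y : k} (h : ¬(x = 0 ∧ y = 0)) :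
    ∃ M : SL(2, k), M.1 0 1 = x ∧ M.1 1 1 = y := by
  obtain rfl | hy := eq_or_ne y 0
  · have hx : x ≠ 0 := by simpa using h
    exact ⟨⟨!![0, x; -x⁻¹, 0], by simp [Matrix.det_fin_two, hx]⟩, rfl, rfl⟩
  · exact ⟨⟨!![y⁻¹, x; 0, y], by simp [Matrix.det_fin_two, hy]⟩, rfl, rfl⟩

theorem hasRootOfMultExactly_snd_col_iff (M : SL(2, k)) (f : MvPolynomial (Fin 2) k) (r : ℕ) :
    HasRootOfMultExactly f (M.1 0 1) (M.1 1 1) r ↔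
      X 0 ^ r ∣ linearSubst M.1 f ∧ ¬X 0 ^ (r + 1) ∣ linearSubst M.1 f := by
  have hcol : ¬(M.1 0 1 = 0 ∧ M.1 1 1 = 0) := by
    rintro ⟨h0, h1⟩
    simpa [h0, h1] using (Matrix.det_fin_two M.1).symm.trans M.2
  simp only [HasRootOfMultExactly, hcol, not_false_eq_true, true_and,
    ← linearSubst_dvd_linearSubst_iff M (g := f), map_pow, linearSubst_linearForm]

theorem exists_hasRootOfMultExactly_binomForm_iff {n r : ℕ} (hn : (n.factorial : k) ≠ 0)
    (hr : r ≤ n) (A : ℕ → k) :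
    (∃ x y, HasRootOfMultExactly (binomForm n A) x y r) ↔
      ∃ (M : SL(2, k)) (B : ℕ → k), linearSubst M.1 (binomForm n A) = binomForm n B ∧
        (∀ i < r, B i = 0) ∧ B r ≠ 0 := by
  have dvd_iff (B : ℕ → k) : X 0 ^ r ∣ binomForm n B ∧ ¬X 0 ^ (r + 1) ∣ binomForm n B ↔
      (∀ i < r, B i = 0) ∧ B r ≠ 0 := by
    simp only [X_zero_pow_dvd_binomForm_iff hn]
    grind
  constructor
  · rintro ⟨x, y, h⟩
    obtain ⟨M, rfl, rfl⟩ := exists_specialLinearGroup_snd_col h.1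
    obtain ⟨B, hB⟩ := exists_eq_binomForm hn
      (linearSubst_isHomogeneous M.1 (binomForm_isHomogeneous n A))
    exact ⟨M, B, hB, (dvd_iff B).1 (hB ▸ (hasRootOfMultExactly_snd_col_iff M _ r).1 h)⟩
  · rintro ⟨M, B, hB, h⟩
    exact ⟨_, _, (hasRootOfMultExactly_snd_col_iff M _ r).2 (hB ▸ (dvd_iff B).2 h)⟩

section Shear

variable {R : Type*} [CommRing R]

/-- The normalised coefficients of the form obtained from `binomForm n A` by
`X 1 ↦ t * X 0 + X 1`. -/
def shearCoeff (t : R) (A : ℕ → R) (i : ℕ) : R :=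
  ∑ uv ∈ antidiagonal i, i.choose uv.1 * t ^ uv.2 * A uv.1

theorem linearSubst_shear_binomForm (t : R) (n : ℕ) (A : ℕ → R) :
    linearSubst !![1, 0; t, 1] (binomForm n A) = binomForm n (shearCoeff t A) := by
  have subst_zero : linearSubst !![1, 0; t, 1] (X 0) = X 0 := by simp [linearSubst_X]
  have subst_one : linearSubst !![1, 0; t, 1] (X 1) = C t * X 0 + X 1 := by simp [linearSubst_X]
  have expand_left : linearSubst !![1, 0; t, 1] (binomForm n A) =
      ∑ ij ∈ antidiagonal n, ∑ uv ∈ antidiagonal ij.2,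
        C ((n.choose ij.1 * ij.2.choose uv.1 : ℕ) * t ^ uv.1 * A ij.1) * X 0 ^ (ij.1 + uv.1) *
          X 1 ^ uv.2 := by
    simp only [binomForm, map_sum, map_mul, map_pow, linearSubst_C, subst_zero, subst_one,
      (Commute.all (C t * X 0 : MvPolynomial (Fin 2) R) (X 1)).add_pow', Finset.mul_sum]
    refine Finset.sum_congr rfl fun ij _ => Finset.sum_congr rfl fun uv _ => ?_
    simp only [nsmul_eq_mul, map_mul, map_natCast, Nat.cast_mul, mul_pow]
    ring
  have expand_right : binomForm n (shearCoeff t A) =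
      ∑ ij ∈ antidiagonal n, ∑ uv ∈ antidiagonal ij.1,
        C ((n.choose ij.1 * ij.1.choose uv.1 : ℕ) * t ^ uv.2 * A uv.1) * X 0 ^ ij.1 *
          X 1 ^ ij.2 := by
    refine Finset.sum_congr rfl fun ij _ => ?_
    rw [shearCoeff, Finset.mul_sum, map_sum, Finset.sum_mul, Finset.sum_mul]
    refine Finset.sum_congr rfl fun uv _ => ?_
    push_cast
    ring_nf
  rw [expand_left, expand_right, Finset.sum_sigma', Finset.sum_sigma']
  refine Finset.sum_nbij' (fun s => ⟨(s.1.1 + s.2.1, s.2.2), (s.1.1, s.2.1)⟩)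
    (fun s => ⟨(s.2.1, s.2.2 + s.1.2), (s.2.2, s.1.2)⟩) ?_ ?_ ?_ ?_ ?_
  all_goals
    rintro ⟨⟨i, j⟩, u, v⟩ h
    simp only [Finset.mem_sigma, mem_antidiagonal, and_true] at h ⊢
  · omega
  · omega
  · simp [h.2]
  · simp [h.2]
  · rw [Nat.choose_mul (Nat.le_add_right i u), Nat.add_sub_cancel_left, ← h.1,
      Nat.add_sub_cancel_left]

theorem linearSubst_swap_binomForm (n : ℕ) (A : ℕ → R) :
    linearSubst !![0, 1; -1, 0] (binomForm n A) = binomForm n fun i => (-1) ^ i * A (n - i) := by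
  have subst_zero : linearSubst !![0, 1; -1, 0] (X 0) = (X 1 : MvPolynomial (Fin 2) R) := by
    simp [linearSubst_X]
  have subst_one : linearSubst !![0, 1; -1, 0] (X 1) = (-X 0 : MvPolynomial (Fin 2) R) := by
    simp [linearSubst_X]
  rw [binomForm, map_sum, ← Finset.Nat.sum_antidiagonal_swap, binomForm]
  refine Finset.sum_congr rfl fun ij hij => ?_
  have h := mem_antidiagonal.1 hij
  have hchoose : n.choose ij.2 = n.choose ij.1 := (Nat.choose_symm_of_eq_add h.symm).symm
  simp only [Prod.fst_swap, Prod.snd_swap, map_mul, map_pow, map_neg, map_one, linearSubst_C,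
    subst_zero, subst_one, hchoose, ← Nat.eq_sub_of_add_eq' h]
  ring

end Shear

section QuarticNormalForm

variable {R : Type*} [CommRing R]

/-- The invariant `I` of degree two of the quartic `binomForm 4 K`. -/
def quarticI (K : ℕ → R) : R :=
  K 0 * K 4 - 4 * K 1 * K 3 + 3 * K 2 ^ 2

/-- The invariant `J` of degree three (the catalecticant) of the quartic `binomForm 4 K`. -/
def quarticJ (K : ℕ → R) : R :=
  K 0 * K 2 * K 4 + 2 * K 1 * K 2 * K 3 - K 0 * K 3 ^ 2 - K 1 ^ 2 * K 4 - K 2 ^ 3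

theorem shearCoeff_eq_sum_range (t : R) (A : ℕ → R) (i : ℕ) :
    shearCoeff t A i = ∑ j ∈ Finset.range (i + 1), i.choose j * t ^ (i - j) * A j :=
  Finset.Nat.sum_antidiagonal_eq_sum_range_succ_mk _ _

theorem shearCoeff_quartic (t : R) (K : ℕ → R) :
    shearCoeff t K 0 = K 0 ∧
    shearCoeff t K 1 = t * K 0 + K 1 ∧
    shearCoeff t K 2 = t ^ 2 * K 0 + 2 * t * K 1 + K 2 ∧
    shearCoeff t K 3 = t ^ 3 * K 0 + 3 * t ^ 2 * K 1 + 3 * t * K 2 + K 3 ∧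
    shearCoeff t K 4 = t ^ 4 * K 0 + 4 * t ^ 3 * K 1 + 6 * t ^ 2 * K 2 + 4 * t * K 3 + K 4 := by
  simp [shearCoeff_eq_sum_range, Finset.sum_range_succ, Nat.choose]

theorem quarticI_shearCoeff (t : R) (K : ℕ → R) : quarticI (shearCoeff t K) = quarticI K := by
  obtain ⟨h0, h1, h2, h3, h4⟩ := shearCoeff_quartic t K
  rw [quarticI, quarticI, h0, h1, h2, h3, h4]
  ring

theorem quarticJ_shearCoeff (t : R) (K : ℕ → R) : quarticJ (shearCoeff t K) = quarticJ K := by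
  obtain ⟨h0, h1, h2, h3, h4⟩ := shearCoeff_quartic t K
  rw [quarticJ, quarticJ, h0, h1, h2, h3, h4]
  ring

/-- Some substitution of determinant one brings the quartic `binomForm 4 K` to the shape
`L 4 * x ^ 4 + 6 * c * x ^ 2 * y ^ 2`, with a double root at `x = 0`. -/
def HasNormalForm (K : ℕ → R) (c : R) : Prop :=
  ∃ (M : SL(2, R)) (L : ℕ → R), linearSubst M.1 (binomForm 4 K) = binomForm 4 L ∧
    L 0 = 0 ∧ L 1 = 0 ∧ L 2 = c ∧ L 3 = 0

theorem HasNormalForm.of_linearSubst {M : Matrix (Fin 2) (Fin 2) R} (hM : M.det = 1)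
    {K L : ℕ → R} {c : R} (h : linearSubst M (binomForm 4 K) = binomForm 4 L)
    (hL : HasNormalForm L c) : HasNormalForm K c := by
  obtain ⟨N, B, hN, hB⟩ := hL
  exact ⟨⟨M, hM⟩ * N, B, by rw [← hN, ← h, linearSubst_linearSubst]; rfl, hB⟩

theorem HasNormalForm.of_shear (t : R) {K : ℕ → R} {c : R}
    (h : HasNormalForm (shearCoeff t K) c) : HasNormalForm K c :=
  h.of_linearSubst (by simp [Matrix.det_fin_two]) (linearSubst_shear_binomForm t 4 K)

theorem HasNormalForm.of_swap {K : ℕ → R} {c : R}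
    (h : HasNormalForm (fun i => (-1) ^ i * K (4 - i)) c) : HasNormalForm K c :=
  h.of_linearSubst (by simp [Matrix.det_fin_two]) (linearSubst_swap_binomForm 4 K)

end QuarticNormalForm

theorem hasNormalForm_of_zero_one {K : ℕ → k} {c : k} (h3 : (3 : k) ≠ 0) (hc : c ≠ 0)
    (h0 : K 0 = 0) (h1 : K 1 = 0) (h2 : K 2 = c) : HasNormalForm K c := by
  set t := -K 3 / (3 * c) with ht
  refine .of_shear t ⟨1, shearCoeff t K, by simp [linearSubst_one], ?_⟩
  obtain ⟨s0, s1, s2, s3, -⟩ := shearCoeff_quartic t K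
  refine ⟨?_, ?_, ?_, ?_⟩
  · rw [s0, h0]
  · simp [s1, h0, h1]
  · simp [s2, h0, h1, h2]
  · rw [s3, h0, h1, h2, ht]
    field_simp
    ring

theorem hasNormalForm_of_zero {K : ℕ → k} {c : k} (h2 : (2 : k) ≠ 0) (h3 : (3 : k) ≠ 0)
    (hc : c ≠ 0) (hI : quarticI K = 3 * c ^ 2) (hJ : quarticJ K = -c ^ 3) (h0 : K 0 = 0) :
    HasNormalForm K c := by
  by_cases h1 : K 1 = 0
  · have hsq : K 2 ^ 2 = c ^ 2 := mul_left_cancel₀ h3 (by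
      linear_combination (norm := (rw [quarticI, h0, h1]; ring)) hI)
    have hcube : K 2 ^ 3 = c ^ 3 := by simpa [quarticJ, h0, h1] using hJ
    refine hasNormalForm_of_zero_one h3 hc h0 h1 (mul_left_cancel₀ (pow_ne_zero 2 hc) ?_)
    linear_combination hcube - K 2 * hsq
  · have h4 : (4 : k) ≠ 0 := by simpa [show (4 : k) = 2 ^ 2 by norm_num] using h2
    set t := (c - K 2) / (2 * K 1) with ht
    obtain ⟨s0, s1, s2, -, -⟩ := shearCoeff_quartic t K
    rw [← quarticI_shearCoeff t] at hI
    rw [← quarticJ_shearCoeff t] at hJ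
    refine .of_shear t (.of_swap ?_)
    generalize shearCoeff t K = L at *
    replace s0 : L 0 = 0 := s0.trans h0
    replace s1 : L 1 = K 1 := by simp [s1, h0]
    replace s2 : L 2 = c := by
      rw [s2, h0, ht]
      field_simp
      ring
    have h1' : L 1 ≠ 0 := s1 ▸ h1
    have s3 : L 3 = 0 := by
      rw [quarticI, s0, s2] at hI
      exact (mul_eq_zero.1 (by linear_combination -hI)).resolve_left (mul_ne_zero h4 h1')
    have s4 : L 4 = 0 := by
      rw [quarticJ, s0, s2, s3] at hJ
      exact (mul_eq_zero.1 (by linear_combination -hJ)).resolve_left (pow_ne_zero 2 h1')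
    exact hasNormalForm_of_zero_one h3 hc (by simp [s4]) (by simp [s3]) (by simp [s2])

theorem exists_shearCoeff_eq_zero [IsAlgClosed k] {n : ℕ} (hn : n ≠ 0) {A : ℕ → k}
    (h0 : A 0 ≠ 0) : ∃ t, shearCoeff t A n = 0 := by
  let p : Polynomial k :=
    ∑ uv ∈ antidiagonal n, Polynomial.C (n.choose uv.1 * A uv.1) * Polynomial.X ^ uv.2
  have hcoeff : p.coeff n = A 0 := by
    rw [Polynomial.finsetSum_coeff, Finset.sum_eq_single (0, n)]
    · simp
    · rintro ⟨u, v⟩ huv hne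
      have hv : n ≠ v := by
        rintro rfl
        exact hne (by simpa using huv)
      rw [Polynomial.coeff_C_mul_X_pow, if_neg hv]
    · simp
  have hdeg : p.degree ≠ 0 := fun h =>
    hn <| by simpa [h] using Polynomial.le_degree_of_ne_zero (hcoeff.trans_ne h0)
  obtain ⟨t, ht⟩ := IsAlgClosed.exists_root p hdeg
  refine ⟨t, ?_⟩
  rw [Polynomial.IsRoot, Polynomial.eval_finsetSum] at ht
  rw [shearCoeff, ← ht]
  refine Finset.sum_congr rfl fun uv _ => ?_
  simp only [Polynomial.eval_mul, Polynomial.eval_C, Polynomial.eval_pow, Polynomial.eval_X]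
  ring

theorem hasNormalForm_of_quarticI_of_quarticJ [IsAlgClosed k] {K : ℕ → k} {c : k}
    (h2 : (2 : k) ≠ 0) (h3 : (3 : k) ≠ 0) (hc : c ≠ 0) (hI : quarticI K = 3 * c ^ 2)
    (hJ : quarticJ K = -c ^ 3) : HasNormalForm K c := by
  by_cases h0 : K 0 = 0
  · exact hasNormalForm_of_zero h2 h3 hc hI hJ h0
  · obtain ⟨t, ht⟩ := exists_shearCoeff_eq_zero four_ne_zero h0
    rw [← quarticI_shearCoeff t] at hI
    rw [← quarticJ_shearCoeff t] at hJ
    refine .of_shear t (.of_swap (hasNormalForm_of_zero h2 h3 hc ?_ ?_ (by simp [ht])))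
    · rw [← hI, quarticI, quarticI]
      ring
    · rw [← hJ, quarticJ, quarticJ]
      ring

/-- The equations on the normalised coefficients of an octavic which hold when its quartic
covariant is `κ = 50 * β * ρ ^ 2 * x ^ 4 - 50 * ρ ^ 2 * x ^ 2 * y ^ 2` and its invariants are those
of a form `x ^ 4 * q` with `x ^ 4 * y ^ 4`-coefficient `70 * ρ`. The field `covK i` comes from the
`i`-th coefficient of `κ`, the field `invJ n` from `J_n`. -/
structure NormalFormEquations (a : ℕ → k) (β ρ : k) : Prop where
  covK0 : a 0 * a 6 - 6 * a 1 * a 5 + 15 * a 2 * a 4 - 10 * a 3 ^ 2 = 0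
  covK1 : a 0 * a 7 - 5 * a 1 * a 6 + 9 * a 2 * a 5 - 5 * a 3 * a 4 = 0
  covK2 : a 0 * a 8 - 2 * a 1 * a 7 - 8 * a 2 * a 6 + 34 * a 3 * a 5 - 25 * a 4 ^ 2 +
    25 * ρ ^ 2 = 0
  covK3 : a 1 * a 8 - 5 * a 2 * a 7 + 9 * a 3 * a 6 - 5 * a 4 * a 5 = 0
  covK4 : a 2 * a 8 - 6 * a 3 * a 7 + 15 * a 4 * a 6 - 10 * a 5 ^ 2 - 25 * β * ρ ^ 2 = 0
  invJ2 : a 0 * a 8 - 8 * a 1 * a 7 + 28 * a 2 * a 6 - 56 * a 3 * a 5 + 35 * a 4 ^ 2 -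
    35 * ρ ^ 2 = 0
  invJ3 : a 0 * a 4 * a 8 - 4 * a 1 * a 3 * a 8 + 3 * a 2 ^ 2 * a 8 + 12 * a 1 * a 4 * a 7 -
    4 * a 0 * a 5 * a 7 - 8 * a 2 * a 3 * a 7 - 22 * a 2 * a 4 * a 6 - 8 * a 1 * a 5 * a 6 +
    3 * a 0 * a 6 ^ 2 + 24 * a 3 ^ 2 * a 6 - 36 * a 3 * a 4 * a 5 + 24 * a 2 * a 5 ^ 2 +
    15 * a 4 ^ 3 - 15 * ρ ^ 3 = 0
  invJ5 : a 4 - 2 * β * a 2 + β ^ 2 * a 0 - ρ = 0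
  invJ7 : a 4 + β * a 2 - 2 * β ^ 2 * a 0 - ρ = 0
  invJ8 : a 0 * a 8 + 12 * a 1 * a 7 - 22 * a 2 * a 6 - 36 * a 3 * a 5 + 45 * a 4 ^ 2 +
    β * (15 * a 0 * a 6 - 20 * a 1 * a 5 - 55 * a 2 * a 4 + 60 * a 3 ^ 2) -
    70 * β ^ 2 * (2 * a 0 * a 4 - 8 * a 1 * a 3 + 6 * a 2 ^ 2) - 45 * ρ ^ 2 = 0

theorem quarticPairing_contractCoeff_self (hk : CharOK k) (A : ℕ → k) {K : ℕ → k} (h0 : K 0 = 0)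
    (h1 : K 1 = 0) (h3 : K 3 = 0) :
    quarticPairing (contractCoeff A K) K =
      36 * K 2 ^ 2 * A 4 + 12 * K 2 * K 4 * A 2 + K 4 ^ 2 * A 0 := by
  simp only [quarticPairing_eq, contractCoeff_apply hk _ _ (show 0 ≤ 4 by norm_num),
    contractCoeff_apply hk _ _ (show 2 ≤ 4 by norm_num), h0, h1, h3]
  ring

theorem quarticPairing_contractCoeff_hessianCoeff (hk : CharOK k) (A : ℕ → k) {K : ℕ → k}
    (h0 : K 0 = 0) (h1 : K 1 = 0) (h3 : K 3 = 0) :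
    quarticPairing (contractCoeff A K) (hessianCoeff K) =
      -36 * K 2 ^ 3 * A 4 + 6 * K 2 ^ 2 * K 4 * A 2 + 2 * K 2 * K 4 ^ 2 * A 0 := by
  have hne := hk.ofNat_ne_zero 3 (e := 1) (by norm_num)
  simp only [quarticPairing_eq, contractCoeff_apply hk _ _ (show 0 ≤ 4 by norm_num),
    contractCoeff_apply hk _ _ (show 2 ≤ 4 by norm_num), hessianCoeff_zero, hessianCoeff_one hk,
    hessianCoeff_two hk, hessianCoeff_three hk, hessianCoeff_four, h0, h1, h3]
  field_simp
  ring

theorem normalFormEquations_of_hasQuadrupleRootInvariants (hk : CharOK k) {a : ℕ → k} {β ρ : k}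
    (hρ : ρ ≠ 0) (h : HasQuadrupleRootInvariants (octCoeff a) (70 * ρ))
    (hκ0 : kappaCoeff a 0 = 0) (hκ1 : kappaCoeff a 1 = 0)
    (hκ2 : kappaCoeff a 2 = -25 * ρ ^ 2 / 3) (hκ3 : kappaCoeff a 3 = 0)
    (hκ4 : kappaCoeff a 4 = 50 * β * ρ ^ 2) : NormalFormEquations a β ρ := by
  have h2 := hk.ofNat_ne_zero 2 (e := 1) (by norm_num)
  have h6 := hk.ofNat_ne_zero 6 (e := 1) (by norm_num)
  have h3 := hk.ofNat_ne_zero 3 (e := 1) (by norm_num)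
  have h7 := hk.ofNat_ne_zero 7 (e := 1) (by norm_num)
  have h35 := hk.ofNat_ne_zero 35 (e := 1) (by norm_num)
  have h70 := hk.ofNat_ne_zero 70 (e := 1) (by norm_num)
  have cancel (i j : ℕ) {x : k} (hx : 6 ^ i * 70 ^ j * x = 0) : x = 0 := by
    simpa [h6, h70] using hx
  obtain ⟨i2, i3, -, i5, -, i7, i8⟩ := (hasQuadrupleRootInvariants_octCoeff_iff hk a _).1 h
  rw [octavicPairing_eq] at i2
  rw [octavicPairing_gCoeff hk] at i3
  rw [quarticPairing_contractCoeff_self hk _ hκ0 hκ1 hκ3, hκ2, hκ4] at i5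
  rw [quarticPairing_contractCoeff_hessianCoeff hk _ hκ0 hκ1 hκ3, hκ2, hκ4] at i7 i8
  rw [gCoeff_zero, gCoeff_two hk, gCoeff_four hk] at i8
  rw [kappaCoeff_zero] at hκ0
  rw [kappaCoeff_one hk] at hκ1
  rw [kappaCoeff_two hk] at hκ2
  rw [kappaCoeff_three hk] at hκ3
  rw [kappaCoeff_four] at hκ4
  field_simp at i3 i5 i7 i8 hκ2
  exact
    { covK0 := cancel 1 0 (by linear_combination 3 * hκ0)
      covK1 := hκ1
      covK2 := by linear_combination hκ2
      covK3 := hκ3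
      covK4 := cancel 1 0 (by linear_combination 3 * hκ4)
      invJ2 := cancel 2 1 (by linear_combination 9 * i2)
      invJ3 := cancel 1 3 (by linear_combination 10 * i3)
      invJ5 := cancel 2 5 (by linear_combination 4 * i5)
      invJ7 := cancel 2 7 (by linear_combination 4 * i7)
      invJ8 := cancel 2 9 (by linear_combination 40 * i8) }

/- The hypotheses are the fields `invJ2`, `covK3` and `covK4` of `NormalFormEquations` for
`a 0 = a 1 = 1`, in terms of the parameters `s`, `y`, `z` introduced in
`NormalFormEquations.false_of_coeff_zero_eq_one` and freed of common factors. -/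
theorem eq_zero_of_reduced_system (hk : CharOK k) {s y z : k} (hs : 3 * s + 1 ≠ 0)
    (e2 : 52 - 9 * y + 216 * s - 75 * z - 108 * s * y = 0)
    (e3 : 80 + 15 * y - 123 * z + 756 * s - 9 * y * z - 594 * s * z + 126 * s * y +
      1728 * s ^ 2 - 27 * s * y * z = 0)
    (e4 : 176 + 81 * y - 357 * z + 708 * s + 9 * y ^ 2 - 81 * y * z + 225 * z ^ 2 -
      576 * s * z + 27 * s * y ^ 2 = 0) : z = 0 := by
  have h900 := hk.ofNat_ne_zero 900 (e := 2) (by norm_num)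
  have hsq : 900 * (3 * s + 1) * z ^ 2 = 0 := by
    linear_combination (27 * s * y + 6 * s + 6 * y - 9 * z ^ 2 - 30 * z + 32) * e2 +
      3 * (-y + 12 * z - 15) * e3 - (-108 * s + 3 * z - 11) * e4
  simpa [h900, hs] using hsq

namespace NormalFormEquations

variable {a : ℕ → k} {β ρ : k}

theorem coeff_four_eq_of_beta_eq_zero (h : NormalFormEquations a 0 ρ) : a 4 = ρ := by
  linear_combination h.invJ5

theorem coeff_two_eq (hk : CharOK k) (h : NormalFormEquations a β ρ) (hβ : β ≠ 0) :
    a 2 = β * a 0 := by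
  have h3 := hk.ofNat_ne_zero 3 (e := 1) (by norm_num)
  refine mul_left_cancel₀ (mul_ne_zero h3 hβ) ?_
  linear_combination h.invJ7 - h.invJ5

theorem coeff_four_eq (hk : CharOK k) (h : NormalFormEquations a β ρ) (hβ : β ≠ 0) :
    a 4 = ρ + β ^ 2 * a 0 := by
  linear_combination h.invJ5 + 2 * β * h.coeff_two_eq hk hβ

theorem reverse (h : NormalFormEquations a 0 ρ) :
    NormalFormEquations (fun i => a (8 - i)) 0 ρ := by
  constructor <;> simp only [Nat.reduceSub]
  · linear_combination h.covK4
  · linear_combination h.covK3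
  · linear_combination h.covK2
  · linear_combination h.covK1
  · linear_combination h.covK0
  · linear_combination h.invJ2
  · linear_combination h.invJ3
  · linear_combination h.invJ5
  · linear_combination h.invJ7
  · linear_combination h.invJ8

theorem coeff_three_mul_coeff_five (hk : CharOK k) (hρ : ρ ≠ 0) (h : NormalFormEquations a 0 ρ) :
    a 3 * a 5 = 0 := by
  have hc := hk.ofNat_ne_zero 31500 (e := 3) (by norm_num)
  have k0 := h.covK0
  have k1 := h.covK1
  have k2 := h.covK2
  have k3 := h.covK3
  have k4 := h.covK4
  have j2 := h.invJ2
  have j3 := h.invJ3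
  have j8 := h.invJ8
  rw [h.coeff_four_eq_of_beta_eq_zero] at *
  refine mul_left_cancel₀ (mul_ne_zero hc (pow_ne_zero 2 hρ)) ?_
  -- The multipliers come from a Gröbner basis computation in the ideal of the equations.
  linear_combination 210 * ρ * j3 + (840 * ρ * a 5 - 84 * a 1 * a 8 - 756 * a 3 * a 6) * k1 +
    (-630 * ρ * a 6 - 126 * a 2 * a 8 + 756 * a 3 * a 7) * k0 +
    (420 * ρ * a 3 - 420 * a 1 * a 6) * k3 +
    (-28 * a 1 * a 7 + 140 * a 3 * a 5 + 28 * a 2 * a 6 - 315 * ρ ^ 2) * j2 +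
    (98 * a 2 * a 6 + 112 * a 1 * a 7 - 140 * a 3 * a 5 + 450 * ρ ^ 2) * k2 +
    (-1260 * a 3 ^ 2 + 1260 * ρ * a 2) * k4 - 345 * ρ ^ 2 * j8

theorem opposite_mul_eq_zero (hk : CharOK k) (hρ : ρ ≠ 0) (h : NormalFormEquations a 0 ρ) :
    a 3 * a 5 = 0 ∧ a 2 * a 6 = 0 ∧ a 1 * a 7 = 0 ∧ a 0 * a 8 = 0 := by
  have h6 := hk.ofNat_ne_zero 6 (e := 1) (by norm_num)
  have h210 := hk.ofNat_ne_zero 210 (e := 1) (by norm_num)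
  have k2 := h.covK2
  have j2 := h.invJ2
  have j8 := h.invJ8
  rw [h.coeff_four_eq_of_beta_eq_zero] at *
  have p3 := h.coeff_three_mul_coeff_five hk hρ
  have p2 : a 2 * a 6 = 0 := mul_left_cancel₀ h210 <| by
    linear_combination 3 * (j8 - k2) - 7 * (k2 - j2) + 840 * p3
  have p1 : a 1 * a 7 = 0 := mul_left_cancel₀ h6 <| by
    linear_combination k2 - j2 + 36 * p2 - 90 * p3
  exact ⟨p3, p2, p1, by linear_combination k2 + 2 * p1 + 8 * p2 - 34 * p3⟩

theorem coeff_three_eq_zero (hk : CharOK k) (hρ : ρ ≠ 0) (h : NormalFormEquations a 0 ρ) :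
    a 3 = 0 := by
  have h5 := hk.ofNat_ne_zero 5 (e := 1) (by norm_num)
  have h6 := hk.ofNat_ne_zero 6 (e := 1) (by norm_num)
  have h9 := hk.ofNat_ne_zero 9 (e := 2) (by norm_num)
  have h15 := hk.ofNat_ne_zero 15 (e := 1) (by norm_num)
  obtain ⟨p3, p2, p1, p0⟩ := h.opposite_mul_eq_zero hk hρ
  have k1 := h.covK1
  have k3 := h.covK3
  have k4 := h.covK4
  rw [h.coeff_four_eq_of_beta_eq_zero] at k1 k3 k4
  by_contra ha3
  have ha5 : a 5 = 0 := (mul_eq_zero.1 p3).resolve_left ha3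
  have ha6 : a 6 ≠ 0 := by
    intro ha6
    have ha0 : a 0 * a 7 ≠ 0 := by
      have h07 : a 0 * a 7 = 5 * a 3 * ρ := by linear_combination k1 + 5 * a 1 * ha6 - 9 * a 2 * ha5
      rw [h07]
      exact mul_ne_zero (mul_ne_zero h5 ha3) hρ
    have ha8 : a 8 = 0 := (mul_eq_zero.1 p0).resolve_left (left_ne_zero_of_mul ha0)
    refine mul_ne_zero (mul_ne_zero h6 ha3) (right_ne_zero_of_mul ha0) ?_
    linear_combination -k4 + a 2 * ha8 + 15 * ρ * ha6 - 10 * a 5 * ha5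
  have ha2 : a 2 = 0 := (mul_eq_zero.1 p2).resolve_right ha6
  have ha1 : a 1 ≠ 0 := by
    intro ha1
    refine mul_ne_zero (mul_ne_zero h9 ha3) ha6 ?_
    linear_combination k3 - a 8 * ha1 + 5 * a 7 * ha2 + 5 * ρ * ha5
  have ha7 : a 7 = 0 := (mul_eq_zero.1 p1).resolve_left ha1
  refine mul_ne_zero (mul_ne_zero h15 hρ) ha6 ?_
  linear_combination k4 - a 8 * ha2 + 6 * a 3 * ha7 + 10 * a 5 * ha5

theorem vanishing_of_beta_eq_zero (hk : CharOK k) (hρ : ρ ≠ 0) (h : NormalFormEquations a 0 ρ) :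
    (∀ i < 4, a i = 0) ∨ ∀ i < 4, a (8 - i) = 0 := by
  have h15 := mul_ne_zero (hk.ofNat_ne_zero 15 (e := 1) (by norm_num)) hρ
  have ha3 : a 3 = 0 := h.coeff_three_eq_zero hk hρ
  have ha5 : a 5 = 0 := h.reverse.coeff_three_eq_zero hk hρ
  obtain ⟨-, p2, p1, p0⟩ := h.opposite_mul_eq_zero hk hρ
  have ⟨k0, k1, _, k3, k4, _, _, _, _, _⟩ := h
  rw [h.coeff_four_eq_of_beta_eq_zero] at k0 k1 k3 k4
  have ha2 : a 2 = 0 := by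
    have hsq : 15 * ρ * a 2 ^ 2 = 0 := by
      linear_combination a 2 * k0 - a 0 * p2 + 6 * a 1 * a 2 * ha5 + 10 * a 2 * a 3 * ha3
    exact pow_eq_zero_iff two_ne_zero |>.1 ((mul_eq_zero.1 hsq).resolve_left h15)
  have ha6 : a 6 = 0 := by
    have hsq : 15 * ρ * a 6 ^ 2 = 0 := by
      linear_combination a 6 * k4 - a 8 * p2 + 6 * a 6 * a 7 * ha3 + 10 * a 5 * a 6 * ha5
    exact pow_eq_zero_iff two_ne_zero |>.1 ((mul_eq_zero.1 hsq).resolve_left h15)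
  have p07 : a 0 * a 7 = 0 := by
    linear_combination k1 + 5 * a 1 * ha6 - 9 * a 2 * ha5 + 5 * ρ * ha3
  have p18 : a 1 * a 8 = 0 := by
    linear_combination k3 + 5 * a 7 * ha2 - 9 * a 3 * ha6 + 5 * ρ * ha5
  have hends : (a 0 = 0 ∧ a 1 = 0) ∨ (a 8 = 0 ∧ a 7 = 0) := by
    obtain ha0 | ha7 := mul_eq_zero.1 p07
    · obtain ha1 | ha8 := mul_eq_zero.1 p18
      · exact .inl ⟨ha0, ha1⟩
      · exact (mul_eq_zero.1 p1).imp (⟨ha0, ·⟩) (⟨ha8, ·⟩)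
    · obtain ha0 | ha8 := mul_eq_zero.1 p0
      · exact (mul_eq_zero.1 p18).imp (⟨ha0, ·⟩) (⟨·, ha7⟩)
      · exact .inr ⟨ha8, ha7⟩
  refine hends.imp (fun ⟨ha0, ha1⟩ i hi => ?_) fun ⟨ha8, ha7⟩ i hi => ?_
  · interval_cases i <;> assumption
  · interval_cases i <;> assumption

theorem vanishing_of_coeff_zero_eq_zero (hk : CharOK k) (hρ : ρ ≠ 0)
    (h : NormalFormEquations a β ρ) (hβ : β ≠ 0) (ha0 : a 0 = 0) : ∀ i < 4, a i = 0 := by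
  have h6 := hk.ofNat_ne_zero 6 (e := 1) (by norm_num)
  have h10 := hk.ofNat_ne_zero 10 (e := 1) (by norm_num)
  have h25 := hk.ofNat_ne_zero 25 (e := 2) (by norm_num)
  have h192 := hk.ofNat_ne_zero 192 (e := 6) (by norm_num)
  have ha2 : a 2 = 0 := by rw [h.coeff_two_eq hk hβ, ha0, mul_zero]
  have ha4 : a 4 = ρ := by rw [h.coeff_four_eq hk hβ, ha0, mul_zero, add_zero]
  have ⟨k0, k1, k2, _, k4, j2, _, _, _, _⟩ := h
  rw [ha0, ha2, ha4] at k0 k1 k2 j2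
  rw [ha2, ha4] at k4
  have p35 : a 3 * a 5 = 0 := mul_left_cancel₀ h192 (by linear_combination 4 * k2 - j2)
  have ha3 : a 3 = 0 := by
    have hcube : 10 * a 3 ^ 3 = 0 := by linear_combination -a 3 * k0 - 6 * a 1 * p35
    simpa [h10] using hcube
  have p15 : a 1 * a 5 = 0 := mul_left_cancel₀ h6 (by linear_combination -k0 - 10 * a 3 * ha3)
  have ha1 : a 1 = 0 := by
    have hprod : 25 * β * ρ ^ 2 * a 1 ^ 2 = 0 := by
      linear_combination -a 1 ^ 2 * k4 - 6 * a 1 ^ 2 * a 7 * ha3 - 3 * ρ * a 1 * k1 -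
        10 * a 1 * a 5 * p15 - 15 * ρ ^ 2 * a 1 * ha3
    simpa [h25, hβ, hρ] using hprod
  intro i hi
  interval_cases i <;> assumption

theorem coeff_three_mul_coeff_one (hk : CharOK k) (hρ : ρ ≠ 0) (h : NormalFormEquations a β ρ)
    (hβ : β ≠ 0) : 3 * a 1 * a 3 + 5 * β * a 1 ^ 2 - 8 * β ^ 2 * a 0 ^ 2 = 0 := by
  have h90 := hk.ofNat_ne_zero 90 (e := 2) (by norm_num)
  have ha2 := h.coeff_two_eq hk hβ
  have ha4 := h.coeff_four_eq hk hβ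
  have ⟨k0, k1, k2, k3, k4, j2, j3, _, _, _⟩ := h
  rw [ha2, ha4] at k0 k1 k2 k3 k4 j2 j3
  refine mul_left_cancel₀ (mul_ne_zero h90 (pow_ne_zero 2 hρ)) ?_
  -- As in `coeff_three_mul_coeff_five`, the multipliers come from a Gröbner basis computation.
  linear_combination (-a 0 * ρ + 22 * a 1 * a 3 - 22 * a 0 ^ 2 * β ^ 2) * k2 +
    (-54 * a 1 * ρ - 54 * a 0 * a 1 * β ^ 2 + 12 * a 0 * a 5 + 42 * a 0 * a 3 * β) * k1 +
    (-21 * a 0 * β * ρ + 30 * a 1 * a 5 - 9 * a 0 * a 6 - 21 * a 0 ^ 2 * β ^ 3) * k0 +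
    (-2 * a 0 * ρ + 8 * a 1 * a 3 - 8 * a 0 ^ 2 * β ^ 2) * j2 +
    (-18 * a 1 ^ 2 + 18 * a 0 ^ 2 * β) * k4 +
    (18 * a 0 * a 1 * β - 18 * a 0 * a 3) * k3 + 3 * a 0 * j3

theorem scale (h : NormalFormEquations a β ρ) (u v : k) :
    NormalFormEquations (fun i => u * v ^ i * a i) (v ^ 2 * β) (u * v ^ 4 * ρ) := by
  obtain ⟨k0, k1, k2, k3, k4, j2, j3, j5, j7, j8⟩ := h
  constructor
  · linear_combination u ^ 2 * v ^ 6 * k0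
  · linear_combination u ^ 2 * v ^ 7 * k1
  · linear_combination u ^ 2 * v ^ 8 * k2
  · linear_combination u ^ 2 * v ^ 9 * k3
  · linear_combination u ^ 2 * v ^ 10 * k4
  · linear_combination u ^ 2 * v ^ 8 * j2
  · linear_combination u ^ 3 * v ^ 12 * j3
  · linear_combination u * v ^ 4 * j5
  · linear_combination u * v ^ 4 * j7
  · linear_combination u ^ 2 * v ^ 8 * j8

theorem tail_coeffs (h : NormalFormEquations a β ρ) (ha0 : a 0 = 1) (ha1 : a 1 = 1) :
    a 6 = 6 * a 5 - 15 * a 2 * a 4 + 10 * a 3 ^ 2 ∧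
    a 7 = 5 * a 6 - 9 * a 2 * a 5 + 5 * a 3 * a 4 ∧
    a 8 = 2 * a 7 + 8 * a 2 * a 6 - 34 * a 3 * a 5 + 25 * a 4 ^ 2 - 25 * ρ ^ 2 := by
  have ⟨k0, k1, k2, _, _, _, _, _, _, _⟩ := h
  rw [ha0, ha1] at k0 k1 k2
  exact ⟨by linear_combination k0, by linear_combination k1, by linear_combination k2⟩

theorem false_of_beta_eq_one (hk : CharOK k) (hρ : ρ ≠ 0) (h : NormalFormEquations a 1 ρ)
    (ha0 : a 0 = 1) (ha1 : a 1 = 1) : False := by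
  have h3 := hk.ofNat_ne_zero 3 (e := 1) (by norm_num)
  have h25 := hk.ofNat_ne_zero 25 (e := 2) (by norm_num)
  have h210 := hk.ofNat_ne_zero 210 (e := 1) (by norm_num)
  have ha2 : a 2 = 1 := by simpa [ha0] using h.coeff_two_eq hk one_ne_zero
  have ha4 : a 4 = ρ + 1 := by simpa [ha0] using h.coeff_four_eq hk one_ne_zero
  have ha3 : a 3 = 1 := mul_left_cancel₀ h3 <| by
    have h13 := h.coeff_three_mul_coeff_one hk hρ one_ne_zero
    rw [ha0, ha1] at h13
    linear_combination h13
  obtain ⟨ha6, ha7, ha8⟩ := h.tail_coeffs ha0 ha1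
  have ⟨_, _, _, k3, _, _, _, _, _, j8⟩ := h
  simp only [ha0, ha1, ha8, ha7, ha6, ha2, ha3, ha4] at k3 j8
  have ha5 : a 5 = 1 + 5 * ρ := mul_left_cancel₀ h210 (by linear_combination j8)
  rw [ha5] at k3
  exact mul_ne_zero h25 (pow_ne_zero 2 hρ) (by linear_combination -k3)

theorem false_of_coeff_zero_eq_one (hk : CharOK k) (hρ : ρ ≠ 0) (h : NormalFormEquations a β ρ)
    (hβ : β ≠ 0) (ha0 : a 0 = 1) (ha1 : a 1 = 1) : False := by
  have h3 := hk.ofNat_ne_zero 3 (e := 1) (by norm_num)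
  have h12 := hk.ofNat_ne_zero 12 (e := 2) (by norm_num)
  have h80 := hk.ofNat_ne_zero 80 (e := 4) (by norm_num)
  have h160 := hk.ofNat_ne_zero 160 (e := 5) (by norm_num)
  have h240 := hk.ofNat_ne_zero 240 (e := 4) (by norm_num)
  obtain ⟨s, rfl⟩ : ∃ s, β = 3 * s + 1 := ⟨(β - 1) / 3, by field_simp; ring⟩
  set β := 3 * s + 1 with hβs
  obtain rfl | hs := eq_or_ne s 0
  · rw [mul_zero, zero_add] at hβs
    exact (hβs ▸ h).false_of_beta_eq_one hk hρ ha0 ha1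
  have hs2 := pow_ne_zero 2 hs
  have hβ2 := pow_ne_zero 2 hβ
  -- In terms of `s`, `y` and `z` a factor `s ^ 2` and powers of `β` split off from each equation.
  obtain ⟨z, rfl⟩ : ∃ z, ρ = 12 * β * s * z := ⟨ρ / (12 * β * s), by field_simp⟩
  obtain ⟨y, ha5⟩ : ∃ y, a 5 = β ^ 2 * (8 * s + 1) + β * (12 * β * s) * y :=
    ⟨(a 5 - β ^ 2 * (8 * s + 1)) / (β * (12 * β * s)), by field_simp; ring⟩
  have ha2 : a 2 = β := by rw [h.coeff_two_eq hk hβ, ha0, mul_one]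
  have ha4 : a 4 = 12 * β * s * z + β ^ 2 := by rw [h.coeff_four_eq hk hβ, ha0, mul_one]
  have ha3 : a 3 = β * (8 * s + 1) := mul_left_cancel₀ h3 <| by
    have h13 := h.coeff_three_mul_coeff_one hk hρ hβ
    rw [ha0, ha1] at h13
    linear_combination h13
  obtain ⟨ha6, ha7, ha8⟩ := h.tail_coeffs ha0 ha1
  have ⟨_, _, _, k3, k4, j2, _, _, _, _⟩ := h
  simp only [ha0, ha1, ha8, ha7, ha6, ha2, ha3, ha4, ha5] at j2 k3 k4
  refine right_ne_zero_of_mul hρ (eq_zero_of_reduced_system hk (s := s) (y := y) hβ ?_ ?_ ?_)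
  · refine mul_left_cancel₀ (mul_ne_zero h240 (mul_ne_zero hs2 hβ2)) ?_
    linear_combination j2
  · refine mul_left_cancel₀ (mul_ne_zero h80 (mul_ne_zero hs2 hβ2)) ?_
    linear_combination k3
  · refine mul_left_cancel₀ (mul_ne_zero h160 (mul_ne_zero hs2 (pow_ne_zero 3 hβ))) ?_
    linear_combination -k4

theorem coeff_zero_eq_zero (hk : CharOK k) (hρ : ρ ≠ 0) (h : NormalFormEquations a β ρ)
    (hβ : β ≠ 0) : a 0 = 0 := by
  by_contra ha0
  have h8 := hk.ofNat_ne_zero 8 (e := 3) (by norm_num)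
  have ha1 : a 1 ≠ 0 := by
    intro ha1
    refine mul_ne_zero (mul_ne_zero h8 (pow_ne_zero 2 hβ)) (pow_ne_zero 2 ha0) ?_
    linear_combination -h.coeff_three_mul_coeff_one hk hρ hβ + (3 * a 3 + 5 * β * a 1) * ha1
  refine (h.scale (a 0)⁻¹ (a 0 / a 1)).false_of_coeff_zero_eq_one hk ?_ ?_ ?_ ?_
  · exact mul_ne_zero (mul_ne_zero (inv_ne_zero ha0) (pow_ne_zero 4 (div_ne_zero ha0 ha1))) hρ
  · exact mul_ne_zero (pow_ne_zero 2 (div_ne_zero ha0 ha1)) hβ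
  · field_simp
  · field_simp

theorem coeff_four_and_vanishing (hk : CharOK k) (hρ : ρ ≠ 0) (h : NormalFormEquations a β ρ) :
    a 4 = ρ ∧ ((∀ i < 4, a i = 0) ∨ ∀ i < 4, a (8 - i) = 0) := by
  obtain rfl | hβ := eq_or_ne β 0
  · exact ⟨h.coeff_four_eq_of_beta_eq_zero, h.vanishing_of_beta_eq_zero hk hρ⟩
  · have ha0 := h.coeff_zero_eq_zero hk hρ hβ
    refine ⟨?_, .inl (h.vanishing_of_coeff_zero_eq_zero hk hρ hβ ha0)⟩
    rw [h.coeff_four_eq hk hβ, ha0, mul_zero, add_zero]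

end NormalFormEquations

theorem quarticPairing_self (K : ℕ → k) : quarticPairing K K = 2 * quarticI K := by
  rw [quarticPairing_eq, quarticI]
  ring

theorem quarticPairing_hessianCoeff (hk : CharOK k) (K : ℕ → k) :
    quarticPairing K (hessianCoeff K) = 6 * quarticJ K := by
  have h3 := hk.ofNat_ne_zero 3 (e := 1) (by norm_num)
  rw [quarticPairing_eq, hessianCoeff_zero, hessianCoeff_one hk, hessianCoeff_two hk,
    hessianCoeff_three hk, hessianCoeff_four, quarticJ]
  field_simp
  ring

theorem covk_of_linearSubst (M : SL(2, k)) {a b : Fin 9 → k}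
    (h : octForm b = linearSubst M.1 (octForm a)) : covk b = linearSubst M.1 (covk a) := by
  rw [covk, covk, h, transvectant_linearSubst]

theorem hasNormalForm_kappaCoeff [IsAlgClosed k] (hk : CharOK k) {A : ℕ → k} {ρ : k} (hρ : ρ ≠ 0)
    (h : HasQuadrupleRootInvariants (octCoeff A) (70 * ρ)) :
    HasNormalForm (kappaCoeff A) (-25 * ρ ^ 2 / 3) := by
  have h2 := hk.ofNat_ne_zero 2 (e := 1) (by norm_num)
  have h3 := hk.ofNat_ne_zero 3 (e := 1) (by norm_num)
  have h25 := hk.ofNat_ne_zero 25 (e := 2) (by norm_num)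
  have hcI := hk.ofNat_ne_zero (2 ^ 10 * 7 ^ 4) (e := 10) (by norm_num)
  have hcJ := hk.ofNat_ne_zero (2 ^ 15 * 7 ^ 6) (e := 15) (by norm_num)
  obtain ⟨-, -, i4, -, i6, -⟩ := (hasQuadrupleRootInvariants_octCoeff_iff hk A _).1 h
  rw [quarticPairing_self] at i4
  rw [quarticPairing_hessianCoeff hk] at i6
  have hI : 3 * quarticI (kappaCoeff A) = 625 * ρ ^ 4 := mul_left_cancel₀ hcI <| by
    linear_combination i4
  have hJ : 27 * quarticJ (kappaCoeff A) = 15625 * ρ ^ 6 := mul_left_cancel₀ hcJ <| by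
    linear_combination i6
  refine hasNormalForm_of_quarticI_of_quarticJ h2 h3 ?_ ?_ ?_
  · simp [h3, h25, hρ]
  · field_simp
    linear_combination hI
  · field_simp
    linear_combination hJ

theorem exists_linearSubst_normalFormEquations [IsAlgClosed k] (hk : CharOK k) {A : ℕ → k} {ρ : k}
    (hρ : ρ ≠ 0) (h : HasQuadrupleRootInvariants (octCoeff A) (70 * ρ)) :
    ∃ (M : SL(2, k)) (B : ℕ → k) (β : k), linearSubst M.1 (binomForm 8 A) = binomForm 8 B ∧
      NormalFormEquations B β ρ := by
  have h50 := hk.ofNat_ne_zero 50 (e := 2) (by norm_num)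
  obtain ⟨M, L, hL, hL0, hL1, hL2, hL3⟩ := hasNormalForm_kappaCoeff hk hρ h
  obtain ⟨B, hB⟩ := exists_eq_binomForm (hk.factorial_ne_zero (le_refl 8))
    (linearSubst_isHomogeneous M.1 (binomForm_isHomogeneous 8 A))
  have hoct : octForm (octCoeff B) = linearSubst M.1 (octForm (octCoeff A)) := by
    rw [octForm_octCoeff, octForm_octCoeff, hB]
  have hκ : ∀ i ≤ 4, kappaCoeff B i = L i := by
    rw [← binomForm_eq_iff (hk.factorial_ne_zero (show 4 ≤ 8 by norm_num)), ← hL,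
      ← covk_octCoeff hk, ← covk_octCoeff hk, covk_of_linearSubst M hoct]
  refine ⟨M, B, kappaCoeff B 4 / (50 * ρ ^ 2), hB,
    normalFormEquations_of_hasQuadrupleRootInvariants hk hρ
      ((hasQuadrupleRootInvariants_iff_of_linearSubst M hoct _).2 h) ?_ ?_ ?_ ?_ ?_⟩
  · rw [hκ 0 (by norm_num), hL0]
  · rw [hκ 1 (by norm_num), hL1]
  · rw [hκ 2 (by norm_num), hL2]
  · rw [hκ 3 (by norm_num), hL3]
  · field_simp

theorem exists_linearSubst_vanishing [IsAlgClosed k] (hk : CharOK k) {A : ℕ → k} {r : k}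
    (hr : r ≠ 0) (h : HasQuadrupleRootInvariants (octCoeff A) r) :
    ∃ (M : SL(2, k)) (B : ℕ → k), linearSubst M.1 (binomForm 8 A) = binomForm 8 B ∧
      (∀ i < 4, B i = 0) ∧ B 4 ≠ 0 := by
  have h70 := hk.ofNat_ne_zero 70 (e := 1) (by norm_num)
  obtain ⟨ρ, rfl⟩ : ∃ ρ, r = 70 * ρ := ⟨r / 70, by field_simp⟩
  have hρ : ρ ≠ 0 := right_ne_zero_of_mul hr
  obtain ⟨M, B, β, hB, hNF⟩ := exists_linearSubst_normalFormEquations hk hρ h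
  obtain ⟨hB4, hlow | hhigh⟩ := hNF.coeff_four_and_vanishing hk hρ
  · exact ⟨M, B, hB, hlow, hB4 ▸ hρ⟩
  · refine ⟨M * ⟨!![0, 1; -1, 0], by simp [Matrix.det_fin_two]⟩, fun i => (-1) ^ i * B (8 - i),
      ?_, fun i hi => by simp [hhigh i hi], by simpa [hB4] using hρ⟩
    rw [← linearSubst_swap_binomForm, ← hB, linearSubst_linearSubst]
    rfl

theorem exists_hasRootOfMultExactly_four_iff [IsAlgClosed k] (hk : CharOK k) (A : ℕ → k) :
    (∃ x y, HasRootOfMultExactly (octForm (octCoeff A)) x y 4) ↔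
      ∃ r, r ≠ 0 ∧ HasQuadrupleRootInvariants (octCoeff A) r := by
  rw [octForm_octCoeff, exists_hasRootOfMultExactly_binomForm_iff
    (hk.factorial_ne_zero (le_refl 8)) (by norm_num)]
  refine ⟨fun ⟨M, B, hB, hlow, hB4⟩ => ?_, fun ⟨r, hr, h⟩ => exists_linearSubst_vanishing hk hr h⟩
  have hoct : octForm (octCoeff B) = linearSubst M.1 (octForm (octCoeff A)) := by
    rw [octForm_octCoeff, octForm_octCoeff, hB]
  exact ⟨70 * B 4, mul_ne_zero (hk.ofNat_ne_zero 70 (e := 1) (by norm_num)) hB4,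
    (hasQuadrupleRootInvariants_iff_of_linearSubst M hoct _).1
      (hasQuadrupleRootInvariants_of_vanishing hk hlow)⟩

/-- A nonzero binary octavic has a root of multiplicity exactly four if and only if its
invariants are of the form `J_2 = 2r², J_3 = 2²·3·r³, J_4 = 2⁶·r⁴, J_5 = 2⁶·r⁵, J_6 = 2⁹·r⁶,
J_7 = 2⁹·r⁷, J_8 = 2¹¹·3²·r⁸` for some `r ≠ 0`; moreover for
`f = x⁴(ax⁴ + bx³y + cx²y² + dxy³ + ey⁴)` these identities hold with `r = e`. -/
theorem hasRootOfMultFour_iff_J (k : Type*) [Field k] [IsAlgClosed k] (hk : CharOK k)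
    (a : Fin 9 → k) (ha : octForm a ≠ 0) :
    ((∃ x0 y0 : k, HasRootOfMultExactly (octForm a) x0 y0 4) ↔
      ∃ r : k, r ≠ 0 ∧
        J2 a = 2 * r ^ 2 ∧
        J3 a = 2 ^ 2 * 3 * r ^ 3 ∧
        J4 a = 2 ^ 6 * r ^ 4 ∧
        J5 a = 2 ^ 6 * r ^ 5 ∧
        J6 a = 2 ^ 9 * r ^ 6 ∧
        J7 a = 2 ^ 9 * r ^ 7 ∧
        J8 a = 2 ^ 11 * 3 ^ 2 * r ^ 8) ∧
    (∀ p q c d e : k, a = ![0, 0, 0, 0, e, d, c, q, p] →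
      J2 a = 2 * e ^ 2 ∧
      J3 a = 2 ^ 2 * 3 * e ^ 3 ∧
      J4 a = 2 ^ 6 * e ^ 4 ∧
      J5 a = 2 ^ 6 * e ^ 5 ∧
      J6 a = 2 ^ 9 * e ^ 6 ∧
      J7 a = 2 ^ 9 * e ^ 7 ∧
      J8 a = 2 ^ 11 * 3 ^ 2 * e ^ 8) := by
  obtain ⟨A, rfl⟩ := exists_eq_octCoeff hk a
  refine ⟨exists_hasRootOfMultExactly_four_iff hk A, fun p q c d e hA => ?_⟩
  have hlow : ∀ i < 4, A i = 0 := by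
    intro i hi
    have hAi := congrFun hA ⟨i, by omega⟩
    have hne := natCast_choose_ne_zero (hk.factorial_ne_zero le_rfl) (show i ≤ 8 by omega)
    interval_cases i <;> exact (mul_eq_zero.1 hAi).resolve_left hne
  have he : 70 * A 4 = e := congrFun hA 4
  exact he ▸ hasQuadrupleRootInvariants_of_vanishing hk hlow
end
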